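/- Assume Setting (C) and let μ ∈ M(X, σ_X) be an invariant Gibbs measure for f. Then: the sequence 𝓖 = {log g_n} is almost additive on Y if and only if there exists a bounded Borel measurable function ĝ on Y for which the push-forward measure πμ is the unique invariant Gibbs measure for ĝ. Moreover, if 𝓖 is merely weakly almost additive on Y, then there exists a bounded Borel measurable function ĝ on Y for which πμ is the unique invariant weak Gibbs measure for ĝ. -/

import Mathlib

open MeasureTheory Filter Topology

noncomputable section

/-- The one-sided shift map. -/
def shift {A : Type*} : (ℕ → A) → ℕ → A := fun x i => x (i + 1)

/-- A finite word appears in some point of `X`. -/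
def AppearsIn {A : Type*} (X : Set (ℕ → A)) (w : List A) : Prop :=
  ∃ x ∈ X, ∃ m : ℕ, ∀ i : Fin w.length, x (m + i) = w.get i

/-- `X` is a (one-sided) subshift: a closed, shift-invariant set. -/
def IsSubshift {A : Type*} [TopologicalSpace A] (X : Set (ℕ → A)) : Prop :=
  IsClosed X ∧ shift '' X ⊆ X

/-- The weak specification property. -/
def WeakSpec {A : Type*} (X : Set (ℕ → A)) : Prop :=
  ∃ p : ℕ, ∀ u v : List A, AppearsIn X u → AppearsIn X v →
    ∃ w : List A, w.length ≤ p ∧ AppearsIn X (u ++ w ++ v)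

/-- The cylinder set `[x_1 … x_n]` inside `X`. -/
def cyl {A : Type*} (X : Set (ℕ → A)) (x : ℕ → A) (n : ℕ) : Set (ℕ → A) :=
  {z ∈ X | ∀ i < n, z i = x i}

/-- Birkhoff sum `(S_n g)(x)`. -/
def birk {A : Type*} (g : (ℕ → A) → ℝ) (n : ℕ) (x : ℕ → A) : ℝ :=
  ∑ i ∈ Finset.range n, g (shift^[i] x)

/-- `μ` is a shift-invariant Borel probability measure concentrated on `X`,
i.e. an element of `M(X, σ_X)`. -/
def IsInvariantOn {A : Type*} [MeasurableSpace A] (μ : Measure (ℕ → A))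
    (X : Set (ℕ → A)) : Prop :=
  IsProbabilityMeasure μ ∧ μ X = 1 ∧
    ∀ B : Set (ℕ → A), MeasurableSet B → μ (shift ⁻¹' B) = μ B

/-- `μ` is a Gibbs measure for the sequence `𝓕 = {log f_n}`. -/
def GibbsSeq {A : Type*} [MeasurableSpace A] (X : Set (ℕ → A))
    (f : ℕ → (ℕ → A) → ℝ) (μ : Measure (ℕ → A)) : Prop :=
  ∃ P C : ℝ, 0 < C ∧ ∀ x ∈ X, ∀ n : ℕ, 1 ≤ n →
    C⁻¹ ≤ (μ (cyl X x n)).toReal / (Real.exp (-(n : ℝ) * P) * f n x) ∧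
    (μ (cyl X x n)).toReal / (Real.exp (-(n : ℝ) * P) * f n x) ≤ C

/-- `μ` is a weak Gibbs measure for the sequence `𝓕 = {log f_n}`. -/
def WeakGibbsSeq {A : Type*} [MeasurableSpace A] (X : Set (ℕ → A))
    (f : ℕ → (ℕ → A) → ℝ) (μ : Measure (ℕ → A)) : Prop :=
  ∃ P : ℝ, ∃ C : ℕ → ℝ, (∀ n : ℕ, 1 ≤ n → 0 < C n) ∧
    Tendsto (fun n : ℕ => Real.log (C n) / n) atTop (𝓝 0) ∧
    ∀ x ∈ X, ∀ n : ℕ, 1 ≤ n →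
      (C n)⁻¹ ≤ (μ (cyl X x n)).toReal / (Real.exp (-(n : ℝ) * P) * f n x) ∧
      (μ (cyl X x n)).toReal / (Real.exp (-(n : ℝ) * P) * f n x) ≤ C n

/-- `μ` is a Gibbs measure for the (Borel measurable) function `g`. -/
def GibbsFun {A : Type*} [MeasurableSpace A] (X : Set (ℕ → A))
    (g : (ℕ → A) → ℝ) (μ : Measure (ℕ → A)) : Prop :=
  GibbsSeq X (fun n x => Real.exp (birk g n x)) μ

/-- `μ` is a weak Gibbs measure for the (Borel measurable) function `g`. -/
def WeakGibbsFun {A : Type*} [MeasurableSpace A] (X : Set (ℕ → A))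
    (g : (ℕ → A) → ℝ) (μ : Measure (ℕ → A)) : Prop :=
  WeakGibbsSeq X (fun n x => Real.exp (birk g n x)) μ

/-- The sequence `{log f_n}` is almost additive on `X` with constant `C`. -/
def AAOn {A : Type*} (X : Set (ℕ → A)) (f : ℕ → (ℕ → A) → ℝ) (C : ℝ) : Prop :=
  ∀ x ∈ X, ∀ n m : ℕ, 1 ≤ n → 1 ≤ m →
    Real.exp (-C) * (f n x * f m (shift^[n] x)) ≤ f (n + m) x ∧
    f (n + m) x ≤ Real.exp C * (f n x * f m (shift^[n] x))

/-- The sequence `{log f_n}` is weakly almost additive on `X`. -/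
def WeakAAOn {A : Type*} (X : Set (ℕ → A)) (f : ℕ → (ℕ → A) → ℝ) : Prop :=
  ∃ C : ℕ → ℝ, (∀ n : ℕ, 1 ≤ n → 0 < C n) ∧
    Tendsto (fun n : ℕ => C n / n) atTop (𝓝 0) ∧
    ∀ x ∈ X, ∀ n m : ℕ, 1 ≤ n → 1 ≤ m →
      Real.exp (-(C n)) * (f n x * f m (shift^[n] x)) ≤ f (n + m) x ∧
      f (n + m) x ≤ Real.exp (C n) * (f n x * f m (shift^[n] x))

open scoped Classical

/-- `g_n(y) = sup_{E_n(y)} Σ_{x ∈ E_n(y)} e^{(S_n f)(x)}`: the sum, over all `n`-blocks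
of `X` projecting to `y_1…y_n`, of the sup of `e^{S_n f}` over the corresponding
cylinder. -/
noncomputable def gseq {kX kY : ℕ} (X : Set (ℕ → Fin kX)) (πs : Fin kX → Fin kY)
    (f : (ℕ → Fin kX) → ℝ) (n : ℕ) (y : ℕ → Fin kY) : ℝ :=
  ∑ u : Fin n → Fin kX,
    if ((∃ x ∈ X, ∀ i : Fin n, x ↑i = u i) ∧ ∀ i : Fin n, πs (u i) = y ↑i) then
      ⨆ x : ↥{z ∈ X | ∀ i : Fin n, z ↑i = u i}, Real.exp (birk f n ↑x)
    else 0

/-- `h_n(y) = sup_{E_n(y)} Σ_{x ∈ E_n(y)} e^{(S_{n-1} f)(x)}` for `n ≥ 2`, and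
`h_1 = g_1`. -/
noncomputable def hseqS {kX kY : ℕ} (X : Set (ℕ → Fin kX)) (πs : Fin kX → Fin kY)
    (f : (ℕ → Fin kX) → ℝ) (n : ℕ) (y : ℕ → Fin kY) : ℝ :=
  if n ≤ 1 then gseq X πs f n y
  else
    ∑ u : Fin n → Fin kX,
      if ((∃ x ∈ X, ∀ i : Fin n, x ↑i = u i) ∧ ∀ i : Fin n, πs (u i) = y ↑i) then
        ⨆ x : ↥{z ∈ X | ∀ i : Fin n, z ↑i = u i}, Real.exp (birk f (n - 1) ↑x)
      else 0

/-- Irreducibility of a subshift: any two words appearing in `X` can be connected. -/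
def IrreducibleShift {A : Type*} (X : Set (ℕ → A)) : Prop :=
  ∀ u v : List A, AppearsIn X u → AppearsIn X v →
    ∃ w : List A, AppearsIn X (u ++ w ++ v)

/-- For a factor map collapsing all symbols except `0`, and a two-coordinate potential
given by `F`: `h_n(y)` is the sum over `n`-blocks `x_1…x_n` of `X` with
`π(x_1)…π(x_n) = y_1…y_n` of `e^{F(x_1,x_2)+⋯+F(x_{n-1},x_n)}` (for `n ≥ 2`), and
`h_1(y) = Σ_{a : π(a) = y_1} sup_{x ∈ [a]} e^{f(x)}`. -/
noncomputable def hseqC {l : ℕ} (X : Set (ℕ → Fin l)) (πs : Fin l → Fin 2)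
    (F : Fin l → Fin l → ℝ) (f : (ℕ → Fin l) → ℝ) (n : ℕ) (y : ℕ → Fin 2) : ℝ :=
  if n ≤ 1 then
    ∑ a : Fin l,
      if πs a = y 0 then (⨆ x : ↥{z ∈ X | z 0 = a}, Real.exp (f ↑x)) else 0
  else
    ∑ u : Fin n → Fin l,
      if ((∃ x ∈ X, ∀ i : Fin n, x ↑i = u i) ∧ ∀ i : Fin n, πs (u i) = y ↑i) then
        Real.exp (∑ i : Fin n,
          if h : (↑i + 1 : ℕ) < n then F (u i) (u ⟨↑i + 1, h⟩) else 0)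
      else 0

/-- The one-block map of Setting (C): symbol `1` (here `0`) goes to `1` (here `0`),
symbols `2, 3` (here `1, 2`) go to `2` (here `1`). -/
def projC {l : ℕ} : Fin l → Fin 2 := fun a => if (a : ℕ) = 0 then 0 else 1

/-- The matrix `M(i,j) = e^{f[ij]} a_{ij}` of Setting (C). -/
noncomputable def MC {l : ℕ} (A : Fin l → Fin l → ℕ) (F : Fin l → Fin l → ℝ) :
    Fin l → Fin l → ℝ := fun i j => Real.exp (F i j) * (A i j : ℝ)

/-- Similarity of `2 × 2` real matrices. -/
def Similar2 (M N : Matrix (Fin 2) (Fin 2) ℝ) : Prop :=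
  ∃ P : Matrix (Fin 2) (Fin 2) ℝ, IsUnit P.det ∧ N = P⁻¹ * M * P

/-!
Summing the Gibbs inequalities of `μ` over the fibres of `π` shows that `ν = πμ` satisfies Gibbs
inequalities for the subadditive sequence `L_n = log g_n`. If `ν` is also Gibbs for a function `ĝ`,
then `L_n` differs from the additive sequence `S_n ĝ` by a multiple of `n` and a bounded error, so
it is almost additive.

Conversely, the symbol `0` has a single preimage and `f` depends on two coordinates, so `L` splits
exactly at each visit of `y` to `0`. Hence `ĝ(y) = L_{N+1}(y) - L_N(σ y)` is the same for all
visiting times `N ≥ 1`, and `S_n ĝ(y) = L_{n+j+1}(y) - L_{j+1}(σ^n y)` whenever `y` visits `0` at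
time `n + j`; by almost additivity this is `L_n(y)` up to the defect. On the sequences that never
return to `0`, which are all `1` from time `1` on, `ĝ` is the growth rate of `L` along `1^∞`.

For uniqueness, `ν` is ergodic, being a factor of a Gibbs measure on an irreducible shift of finite
type, and subadditivity of `L` makes it submultiplicative on words up to a constant. The relative
entropy on `n`-words of another invariant weak Gibbs measure `ν'` with respect to `ν` is therefore
superadditive up to a constant; being `o(n)`, it is bounded. Bounded relative entropy gives
`ν' ≪ ν`, and so `ν' = ν` by ergodicity.
-/

/-! ### Real sequences -/

lemma abs_log_sub_log_le_iff {a b c : ℝ} (ha : 0 < a) (hb : 0 < b) :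
    |Real.log a - Real.log b| ≤ c ↔ a ≤ Real.exp c * b ∧ b ≤ Real.exp c * a := by
  have log_sub_log_le_iff {s t : ℝ} (hs : 0 < s) (ht : 0 < t) :
      Real.log s - Real.log t ≤ c ↔ s ≤ Real.exp c * t := by
    rw [← Real.log_div hs.ne' ht.ne', Real.log_le_iff_le_exp (div_pos hs ht), div_le_iff₀ ht]
  rw [abs_le', neg_sub, log_sub_log_le_iff ha hb, log_sub_log_le_iff hb ha]

lemma sub_le_mul_log_div {r s : ℝ} (hr : 0 ≤ r) (hs : 0 ≤ s) (hsr : s = 0 → r = 0) :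
    r - s ≤ r * Real.log (r / s) := by
  rcases hr.eq_or_lt with rfl | hr
  · simpa using hs
  · have hs' : 0 < s := hs.lt_of_ne fun h => hr.ne' (hsr h.symm)
    calc r - s = r * (1 - (r / s)⁻¹) := by field_simp
      _ ≤ r * Real.log (r / s) := by
          gcongr
          exact Real.one_sub_inv_le_log_of_pos (div_pos hr hs')

lemma le_mul_of_add_le {v T : ℕ → ℝ} {n : ℕ} {e slope : ℝ} (hn : 1 ≤ n) (he : e ≤ v n)
    (hadd : ∀ m, 1 ≤ m → e + v m ≤ v (n + m)) (hvT : ∀ m, 1 ≤ m → v m ≤ T m)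
    (hT : Tendsto (fun m : ℕ => T m / m) atTop (𝓝 slope)) : e ≤ n * slope := by
  have le_multiple (k : ℕ) : ((k + 1 : ℕ) : ℝ) * e ≤ v ((k + 1) * n) := by
    induction k with
    | zero => simpa using he
    | succ k ih =>
      have hstep := hadd ((k + 1) * n) (Nat.mul_pos k.succ_pos hn)
      rw [show (k + 1 + 1) * n = n + (k + 1) * n by ring]
      push_cast at ih hstep ⊢
      linarith
  have tendsto_multiple : Tendsto (fun k : ℕ => (k + 1) * n) atTop atTop :=
    tendsto_atTop_mono (fun k => (Nat.le_succ k).trans (Nat.le_mul_of_pos_right _ hn)) tendsto_id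
  refine ge_of_tendsto ((hT.comp tendsto_multiple).const_mul (n : ℝ)) (.of_forall fun k => ?_)
  have hbound := (le_multiple k).trans (hvT _ (Nat.mul_pos k.succ_pos hn))
  have hn0 : (n : ℝ) ≠ 0 := by exact_mod_cast Nat.one_le_iff_ne_zero.1 hn
  calc e ≤ T ((k + 1) * n) / (k + 1 : ℕ) := (le_div_iff₀' (by positivity)).2 hbound
    _ = n * (T ((k + 1) * n) / ((k + 1) * n : ℕ)) := by push_cast; field_simp [hn0]

lemma exists_slope_of_subadditive {u c : ℕ → ℝ} (hu : Subadditive u)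
    (hlow : ∀ n m, 1 ≤ n → 1 ≤ m → u n + u m - c n ≤ u (n + m)) :
    ∃ slope : ℝ, ∀ n, 1 ≤ n → |u n - n * slope| ≤ c n := by
  have c_nonneg (n : ℕ) (hn : 1 ≤ n) : 0 ≤ c n := by
    linarith [hlow n 1 hn le_rfl, hu n 1]
  have linear_lower (n : ℕ) : ((n + 1 : ℕ) : ℝ) * (u 1 - c 1) ≤ u (n + 1) := by
    induction n with
    | zero => simpa using c_nonneg 1 le_rfl
    | succ n ih =>
      have hstep := hlow 1 (n + 1) le_rfl n.succ_pos
      rw [add_comm (n + 1) 1]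
      push_cast at ih hstep ⊢
      linarith
  have hbdd : BddBelow (Set.range fun n => u n / n) := by
    refine ⟨min 0 (u 1 - c 1), ?_⟩
    rintro _ ⟨_ | n, rfl⟩
    · simp
    · exact (min_le_right _ _).trans ((le_div_iff₀' (by positivity)).2 (linear_lower n))
  refine ⟨hu.lim, fun n hn => abs_le.2 ⟨?_, ?_⟩⟩
  · have hlim := hu.lim_le_div hbdd (Nat.one_le_iff_ne_zero.1 hn)
    rw [le_div_iff₀' (by exact_mod_cast hn)] at hlim
    linarith [c_nonneg n hn]
  · have hupper := le_mul_of_add_le (v := u) (T := u) (e := u n - c n) hn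
      (by linarith [c_nonneg n hn]) (fun m hm => by linarith [hlow n m hn hm])
      (fun _ _ => le_rfl) (hu.tendsto_lim hbdd)
    linarith

lemma tendsto_partialSups_div {c : ℕ → ℝ} (hc : Tendsto (fun n : ℕ => c n / n) atTop (𝓝 0)) :
    Tendsto (fun n : ℕ => partialSups c n / n) atTop (𝓝 0) := by
  refine Metric.tendsto_atTop.2 fun ε hε => ?_
  obtain ⟨N, hN⟩ := Metric.tendsto_atTop.1 hc (ε / 2) (half_pos hε)
  have abs_le_of_large {n : ℕ} (hn : N ≤ n) (hn0 : 0 < n) : |c n| ≤ ε / 2 * n := by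
    have := (hN n hn).le
    rwa [Real.dist_eq, sub_zero, abs_div, Nat.abs_cast, div_le_iff₀ (by exact_mod_cast hn0)] at this
  let M := partialSups (fun n => |c n|) N
  obtain ⟨N', hN'⟩ := exists_nat_gt (2 * M / ε)
  refine ⟨max (N + 1) N', fun n hn => ?_⟩
  have hnpos : (0 : ℝ) < n := by exact_mod_cast (Nat.succ_pos N).trans_le (le_of_max_le_left hn)
  have hM : M < ε * n / 2 := by
    have h2M : 2 * M < n * ε :=
      (div_lt_iff₀ hε).1 (hN'.trans_le (by exact_mod_cast le_of_max_le_right hn))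
    linarith
  have le_partialSups_abs {k : ℕ} (hk : k ≤ N) : |c k| ≤ M :=
    le_partialSups_of_le (fun n => |c n|) hk
  have abs_le_half {k : ℕ} (hk : k ≤ n) : |c k| ≤ ε * n / 2 := by
    rcases le_or_gt k N with hkN | hkN
    · exact (le_partialSups_abs hkN).trans hM.le
    · have : (k : ℝ) ≤ n := by exact_mod_cast hk
      have := abs_le_of_large hkN.le (by omega)
      nlinarith
  have hlow : -(ε * n / 2) ≤ partialSups c n :=
    (neg_le_of_abs_le (abs_le_half le_rfl)).trans (le_partialSups c n)
  have hup : partialSups c n ≤ ε * n / 2 :=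
    partialSups_le c n _ fun k hk => (le_abs_self _).trans (abs_le_half hk)
  rw [Real.dist_eq, sub_zero, abs_div, Nat.abs_cast, div_lt_iff₀ hnpos]
  exact (abs_le.2 ⟨hlow, hup⟩).trans_lt (half_lt_self (mul_pos hε hnpos))

lemma exists_monotone_ge_of_tendsto_div {c : ℕ → ℝ}
    (hc : Tendsto (fun n : ℕ => c n / n) atTop (𝓝 0)) :
    ∃ d : ℕ → ℝ, Monotone d ∧ (∀ n, 0 ≤ d n) ∧ c ≤ d ∧
      Tendsto (fun n : ℕ => d n / n) atTop (𝓝 0) := by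
  have habs : Tendsto (fun n : ℕ => |c n| / n) atTop (𝓝 0) := by
    simpa only [abs_div, Nat.abs_cast, abs_zero] using hc.abs
  have habs_le (n : ℕ) : |c n| ≤ partialSups (fun n => |c n|) n :=
    le_partialSups (fun n => |c n|) n
  exact ⟨partialSups fun n => |c n|, (partialSups _).monotone,
    fun n => (abs_nonneg _).trans (habs_le n), fun n => (le_abs_self _).trans (habs_le n),
    tendsto_partialSups_div habs⟩

/-! ### Words and cylinders -/

/-- The word `x_1 … x_n` of length `n` beginning the sequence `x`. -/
def block {α : Type*} (n : ℕ) (x : ℕ → α) : Fin n → α := fun i => x i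

section Words

variable {α : Type*}

lemma shift_iterate_apply (n : ℕ) (x : ℕ → α) (i : ℕ) : (shift^[n] x) i = x (n + i) := by
  induction n generalizing x with
  | zero => simp
  | succ n ih => rw [Function.iterate_succ_apply, ih]; exact congrArg x (by ring)

lemma block_eq_block_iff {n : ℕ} {x z : ℕ → α} :
    block n x = block n z ↔ ∀ i < n, x i = z i := by
  rw [funext_iff, Fin.forall_iff]
  rfl

lemma block_add (n k : ℕ) (x : ℕ → α) :
    block (n + k) x = Fin.append (block n x) (block k (shift^[n] x)) := by
  funext i
  refine Fin.addCases (fun i => ?_) (fun i => ?_) i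
  · rw [Fin.append_left]; rfl
  · rw [Fin.append_right]; exact (shift_iterate_apply n x i).symm

lemma append_eq_append_iff {n k : ℕ} {u u' : Fin n → α} {v v' : Fin k → α} :
    Fin.append u v = Fin.append u' v' ↔ u = u' ∧ v = v' :=
  ((Fin.appendEquiv n k).injective.eq_iff (a := (u, v)) (b := (u', v'))).trans Prod.mk_inj

lemma block_add_preimage_append {n k : ℕ} (u : Fin n → α) (v : Fin k → α) :
    block (n + k) ⁻¹' {Fin.append u v} =
      block n ⁻¹' {u} ∩ (fun x => block k (shift^[n] x)) ⁻¹' {v} := by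
  ext x
  simp only [Set.mem_preimage, Set.mem_singleton_iff, Set.mem_inter_iff, block_add,
    append_eq_append_iff]

lemma block_shift_iterate_zero (n k : ℕ) (x : ℕ → α) : block (n + 1) (shift^[k] x) 0 = x k := by
  simp [block, shift_iterate_apply]

variable [MeasurableSpace α]

lemma measurable_shift : Measurable (shift : (ℕ → α) → ℕ → α) := by
  unfold shift
  fun_prop

lemma measurable_block (n : ℕ) : Measurable (block n : (ℕ → α) → Fin n → α) := by
  unfold block
  fun_prop

lemma IsInvariantOn.measurePreserving {m : Measure (ℕ → α)} {X : Set (ℕ → α)}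
    (hm : IsInvariantOn m X) : MeasurePreserving shift m m :=
  ⟨measurable_shift, Measure.ext fun B hB => by
    rw [Measure.map_apply measurable_shift hB, hm.2.2 B hB]⟩

/-- The mass that `m` gives to the cylinder of all sequences beginning with the word `w`. -/
def wordMass (m : Measure (ℕ → α)) {n : ℕ} (w : Fin n → α) : ℝ :=
  m.real (block n ⁻¹' {w})

lemma wordMass_nonneg (m : Measure (ℕ → α)) {n : ℕ} (w : Fin n → α) : 0 ≤ wordMass m w :=
  measureReal_nonneg

variable [MeasurableSingletonClass α]

lemma measurableSet_block_preimage [Finite α] (n : ℕ) (S : Set (Fin n → α)) :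
    MeasurableSet (block n ⁻¹' S) :=
  measurable_block n S.toFinite.measurableSet

lemma measureReal_block_preimage [Finite α] (m : Measure (ℕ → α)) [IsFiniteMeasure m] {n : ℕ}
    (S : Finset (Fin n → α)) : m.real (block n ⁻¹' S) = ∑ w ∈ S, wordMass m w :=
  (sum_measureReal_preimage_singleton S fun _ _ => measurableSet_block_preimage n _).symm

lemma sum_measureReal_inter_block [Fintype α] (m : Measure (ℕ → α)) [IsFiniteMeasure m] {n : ℕ}
    {φ : (ℕ → α) → ℕ → α} (hφ : Measurable φ) (A : Set (ℕ → α)) :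
    ∑ w : Fin n → α, m.real (A ∩ (fun x => block n (φ x)) ⁻¹' {w}) = m.real A := by
  have hmeas (w : Fin n → α) : MeasurableSet ((fun x => block n (φ x)) ⁻¹' {w}) :=
    hφ (measurableSet_block_preimage n _)
  have hsum := sum_measureReal_preimage_singleton (μ := m.restrict A) Finset.univ
    fun w _ => hmeas w
  simpa only [Finset.coe_univ, Set.preimage_univ, measureReal_restrict_apply_univ,
    measureReal_restrict_apply (hmeas _), Set.inter_comm A] using hsum

variable [Fintype α] (m : Measure (ℕ → α))

lemma sum_wordMass [IsProbabilityMeasure m] (n : ℕ) : ∑ w : Fin n → α, wordMass m w = 1 := by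
  rw [← measureReal_block_preimage, Finset.coe_univ, Set.preimage_univ, probReal_univ]

lemma sum_wordMass_append_right [IsFiniteMeasure m] {n : ℕ} (k : ℕ) (u : Fin n → α) :
    ∑ v : Fin k → α, wordMass m (Fin.append u v) = wordMass m u := by
  simp only [wordMass, block_add_preimage_append]
  exact sum_measureReal_inter_block m (measurable_shift.iterate n) _

lemma sum_wordMass_append_left [IsFiniteMeasure m] (hm : MeasurePreserving shift m m) (n : ℕ)
    {k : ℕ} (v : Fin k → α) :
    ∑ u : Fin n → α, wordMass m (Fin.append u v) = wordMass m v := by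
  simp only [wordMass, block_add_preimage_append]
  simp only [Set.inter_comm (block n ⁻¹' _)]
  exact (sum_measureReal_inter_block m measurable_id _).trans
    ((hm.iterate n).measureReal_preimage (measurableSet_block_preimage k _).nullMeasurableSet)

end Words

/-- The words of length `n` whose cylinder lies inside `U`; as `n` grows their cylinders exhaust
an open set. -/
def innerWords {α : Type*} (U : Set (ℕ → α)) (n : ℕ) : Set (Fin n → α) :=
  {w | block n ⁻¹' {w} ⊆ U}

section InnerWords

variable {α : Type*}

lemma block_preimage_innerWords_subset (U : Set (ℕ → α)) (n : ℕ) :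
    block n ⁻¹' innerWords U n ⊆ U :=
  fun _ hy => hy rfl

lemma monotone_block_preimage_innerWords (U : Set (ℕ → α)) :
    Monotone fun n => block n ⁻¹' innerWords U n := by
  intro a b hab y hy z hz
  exact hy (block_eq_block_iff.2 fun i hi => block_eq_block_iff.1 hz i (hi.trans_le hab))

variable [TopologicalSpace α]

lemma iUnion_block_preimage_innerWords {U : Set (ℕ → α)} (hU : IsOpen U) :
    ⋃ n, block n ⁻¹' innerWords U n = U := by
  refine (Set.iUnion_subset fun n => block_preimage_innerWords_subset U n).antisymm fun y hy => ?_
  obtain ⟨I, u, hu, hsub⟩ := isOpen_pi_iff.1 hU y hy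
  refine Set.mem_iUnion.2 ⟨I.sup id + 1, fun z hz => hsub fun i hi => ?_⟩
  have hzi : z i = y i :=
    block_eq_block_iff.1 hz i (Nat.lt_succ_of_le (Finset.le_sup (f := id) hi))
  exact hzi ▸ (hu i hi).2

variable [MeasurableSpace α]

lemma tendsto_measure_block_preimage_innerWords (m : Measure (ℕ → α)) {U : Set (ℕ → α)}
    (hU : IsOpen U) :
    Tendsto (fun n => m (block n ⁻¹' innerWords U n)) atTop (𝓝 (m U)) := by
  have htendsto := tendsto_measure_iUnion_atTop (μ := m) (monotone_block_preimage_innerWords U)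
  rwa [iUnion_block_preimage_innerWords hU] at htendsto

end InnerWords

section Comparison

variable {α : Type*} [MeasurableSpace α] [MeasurableSingletonClass α] [Finite α]
  {m₁ m₂ : Measure (ℕ → α)}

lemma measure_le_of_words [IsFiniteMeasure m₂]
    (h : ∀ n, 1 ≤ n → ∀ w : Fin n → α, m₁ (block n ⁻¹' {w}) ≤ m₂ (block n ⁻¹' {w})) :
    m₁ ≤ m₂ := by
  let _ : TopologicalSpace α := ⊥
  have : DiscreteTopology α := ⟨rfl⟩
  have le_on_unions {n : ℕ} (hn : 1 ≤ n) (S : Set (Fin n → α)) :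
      m₁ (block n ⁻¹' S) ≤ m₂ (block n ⁻¹' S) := by
    have hsum (m : Measure (ℕ → α)) := sum_measure_preimage_singleton (μ := m) S.toFinite.toFinset
      fun w _ => measurableSet_block_preimage n {w}
    simp only [Set.Finite.coe_toFinset] at hsum
    rw [← hsum m₁, ← hsum m₂]
    exact Finset.sum_le_sum fun w _ => h n hn w
  refine Measure.le_iff.2 fun B _ => ENNReal.le_of_forall_pos_le_add fun ε hε _ => ?_
  obtain ⟨U, hBU, hUo, hU⟩ := B.exists_isOpen_le_add m₂ (ENNReal.coe_ne_zero.2 hε.ne')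
  refine (measure_mono hBU).trans (le_trans ?_ hU)
  refine le_of_tendsto (tendsto_measure_block_preimage_innerWords m₁ hUo) ?_
  filter_upwards [eventually_ge_atTop 1] with n hn
  exact (le_on_unions hn _).trans (measure_mono (block_preimage_innerWords_subset U n))

lemma absolutelyContinuous_of_words [IsFiniteMeasure m₁] [IsFiniteMeasure m₂]
    (h : ∀ ε : ℝ, 0 < ε → ∃ δ : ℝ, 0 < δ ∧ ∀ n, 1 ≤ n → ∀ S : Set (Fin n → α),
      m₂.real (block n ⁻¹' S) ≤ δ → m₁.real (block n ⁻¹' S) ≤ ε) :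
    m₁ ≪ m₂ := by
  let _ : TopologicalSpace α := ⊥
  have : DiscreteTopology α := ⟨rfl⟩
  intro B hB
  rw [← measureReal_eq_zero_iff]
  refine le_antisymm (le_of_forall_pos_le_add fun ε hε => ?_) measureReal_nonneg
  obtain ⟨δ, hδ, hsmall⟩ := h ε hε
  obtain ⟨U, hBU, hUo, hU⟩ := B.exists_isOpen_le_add m₂ (ε := ENNReal.ofReal δ) (by simpa using hδ)
  rw [hB, zero_add] at hU
  rw [zero_add]
  refine (measureReal_mono hBU).trans ?_
  refine le_of_tendsto ((ENNReal.tendsto_toReal (measure_ne_top _ _)).comp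
    (tendsto_measure_block_preimage_innerWords m₁ hUo)) ?_
  filter_upwards [eventually_ge_atTop 1] with n hn
  exact hsmall n hn _ (ENNReal.toReal_le_of_le_ofReal hδ.le
    ((measure_mono (block_preimage_innerWords_subset U n)).trans hU))

end Comparison

/-! ### Relative entropy -/

/-- The relative entropy `∑ r log (r / s)` of two finite families of weights. A term with `r x = 0`
vanishes, and `r` is always taken absolutely continuous with respect to `s`. -/
def relEntropy {ι : Type*} [Fintype ι] (r s : ι → ℝ) : ℝ :=
  ∑ x, r x * Real.log (r x / s x)

section RelEntropy

lemma relEntropy_le_of_le_exp_mul {ι : Type*} [Fintype ι] {r s : ι → ℝ} {t : ℝ}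
    (hr : ∀ x, 0 ≤ r x) (hr1 : ∑ x, r x = 1)
    (hle : ∀ x, r x ≤ Real.exp t * s x) : relEntropy r s ≤ t := by
  calc relEntropy r s ≤ ∑ x, r x * t := by
        refine Finset.sum_le_sum fun x _ => ?_
        rcases (hr x).eq_or_lt with hrx | hrx
        · simp [← hrx]
        · have hsx : 0 < s x := pos_of_mul_pos_right (hrx.trans_le (hle x)) (Real.exp_pos t).le
          gcongr
          rw [Real.log_le_iff_le_exp (div_pos hrx hsx), div_le_iff₀ hsx]
          exact hle x
    _ = t := by rw [← Finset.sum_mul, hr1, one_mul]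

lemma mul_sum_le_relEntropy_add_one {ι : Type*} [Fintype ι] {r s : ι → ℝ} {t : ℝ}
    (hr : ∀ x, 0 ≤ r x) (hs : ∀ x, 0 ≤ s x) (hsr : ∀ x, s x = 0 → r x = 0)
    (hr1 : ∑ x, r x = 1) (hs1 : ∑ x, s x = 1) {S : Finset ι}
    (hS : ∑ x ∈ S, s x ≤ Real.exp (-t)) : t * ∑ x ∈ S, r x ≤ relEntropy r s + 1 := by
  have sub_le_off (x : ι) : r x - s x ≤ r x * Real.log (r x / s x) :=
    sub_le_mul_log_div (hr x) (hs x) (hsr x)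
  have sub_le_on (x : ι) : t * r x + r x - Real.exp t * s x ≤ r x * Real.log (r x / s x) := by
    have htilted := sub_le_mul_log_div (hr x) (mul_nonneg (Real.exp_pos t).le (hs x))
      fun h => hsr x ((mul_eq_zero.1 h).resolve_left (Real.exp_ne_zero t))
    rcases eq_or_ne (r x) 0 with hrx | hrx
    · simpa [hrx] using htilted
    · rw [mul_comm (Real.exp t), ← div_div, Real.log_div (div_ne_zero hrx (mt (hsr x) hrx))
        (Real.exp_ne_zero t), Real.log_exp] at htilted
      linarith
  have hsplit := add_le_add (Finset.sum_le_sum fun x (_ : x ∈ S) => sub_le_on x)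
    (Finset.sum_le_sum fun x (_ : x ∈ Sᶜ) => sub_le_off x)
  rw [Finset.sum_add_sum_compl, Finset.sum_sub_distrib, Finset.sum_add_distrib,
    Finset.sum_sub_distrib, ← Finset.mul_sum, ← Finset.mul_sum] at hsplit
  have htilt : Real.exp t * ∑ x ∈ S, s x ≤ 1 := by
    calc Real.exp t * ∑ x ∈ S, s x ≤ Real.exp t * Real.exp (-t) := by gcongr
      _ = 1 := by rw [← Real.exp_add, add_neg_cancel, Real.exp_zero]
  have hS0 : 0 ≤ ∑ x ∈ S, s x := Finset.sum_nonneg fun x _ => hs x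
  linarith [Finset.sum_add_sum_compl S r, Finset.sum_add_sum_compl S s,
    show relEntropy r s = ∑ x, r x * Real.log (r x / s x) from rfl]

variable {ι κ : Type*} [Fintype ι] [Fintype κ]

lemma mul_log_div_add_le {r s p q p' q' c : ℝ} (hr : 0 ≤ r) (hs : 0 ≤ s) (hq : 0 ≤ q)
    (hrp : r ≤ p') (hrq : r ≤ q') (hsr : s = 0 → r = 0) (hsub : s ≤ Real.exp c * (p * q)) :
    r - p' * q' + r * (Real.log (p' / p) + Real.log (q' / q) - c) ≤ r * Real.log (r / s) := by
  rcases hr.eq_or_lt with rfl | hr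
  · simpa using mul_nonneg hrp hrq
  have hs : 0 < s := hs.lt_of_ne fun h => hr.ne' (hsr h.symm)
  have hpq : 0 < p * q := pos_of_mul_pos_right (hs.trans_le hsub) (Real.exp_pos c).le
  have hp : 0 < p := pos_of_mul_pos_left hpq hq
  have hq : 0 < q := pos_of_mul_pos_right hpq hp.le
  have hp' := hr.trans_le hrp
  have hq' := hr.trans_le hrq
  have hindep :=
    sub_le_mul_log_div hr.le (mul_pos hp' hq').le fun h => absurd h (mul_pos hp' hq').ne'
  have hlog : Real.log s ≤ c + (Real.log p + Real.log q) := by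
    simpa only [Real.log_mul (Real.exp_ne_zero c) hpq.ne', Real.log_exp,
      Real.log_mul hp.ne' hq.ne'] using Real.log_le_log hs hsub
  rw [Real.log_div hr.ne' (mul_pos hp' hq').ne', Real.log_mul hp'.ne' hq'.ne'] at hindep
  rw [Real.log_div hp'.ne' hp.ne', Real.log_div hq'.ne' hq.ne', Real.log_div hr.ne' hs.ne']
  nlinarith [mul_le_mul_of_nonneg_left hlog hr.le]

lemma relEntropy_marginals_le {r s : ι × κ → ℝ} {p : ι → ℝ} {q : κ → ℝ} {c : ℝ}
    (hr : ∀ x, 0 ≤ r x) (hs : ∀ x, 0 ≤ s x) (hq : ∀ b, 0 ≤ q b)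
    (hr1 : ∑ x, r x = 1) (hsr : ∀ x, s x = 0 → r x = 0)
    (hsub : ∀ a b, s (a, b) ≤ Real.exp c * (p a * q b)) :
    relEntropy (fun a => ∑ b, r (a, b)) p + relEntropy (fun b => ∑ a, r (a, b)) q - c ≤
      relEntropy r s := by
  set p' : ι → ℝ := fun a => ∑ b, r (a, b)
  set q' : κ → ℝ := fun b => ∑ a, r (a, b)
  have hp1 : ∑ a, p' a = 1 := by rw [← hr1, Fintype.sum_prod_type]
  have hq1 : ∑ b, q' b = 1 := by rw [← hr1, Fintype.sum_prod_type_right]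
  have entropy_left : relEntropy p' p = ∑ x, r x * Real.log (p' x.1 / p x.1) := by
    simp only [relEntropy, Fintype.sum_prod_type, ← Finset.sum_mul, p']
  have entropy_right : relEntropy q' q = ∑ x, r x * Real.log (q' x.2 / q x.2) := by
    simp only [relEntropy, Fintype.sum_prod_type_right, ← Finset.sum_mul, q']
  have sum_product : ∑ x : ι × κ, p' x.1 * q' x.2 = 1 := by
    simp only [Fintype.sum_prod_type, ← Finset.mul_sum, hq1, mul_one, hp1]
  calc relEntropy p' p + relEntropy q' q - c
      = ∑ x, (r x - p' x.1 * q' x.2 +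
          r x * (Real.log (p' x.1 / p x.1) + Real.log (q' x.2 / q x.2) - c)) := by
        simp only [mul_add, mul_sub, Finset.sum_add_distrib, Finset.sum_sub_distrib,
          ← Finset.sum_mul, hr1, sum_product, entropy_left, entropy_right]
        ring
    _ ≤ relEntropy r s := Finset.sum_le_sum fun x _ =>
        mul_log_div_add_le (hr x) (hs x) (hq x.2)
          (Finset.single_le_sum (f := fun b => r (x.1, b)) (fun _ _ => hr _) (Finset.mem_univ x.2))
          (Finset.single_le_sum (f := fun a => r (a, x.2)) (fun _ _ => hr _) (Finset.mem_univ x.1))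
          (hsr x) (hsub x.1 x.2)

end RelEntropy

/-- The upper quasi-Bernoulli property, with constant `exp c`: concatenation of nonempty words is
submultiplicative for `m`. -/
def WordSubmultiplicative {α : Type*} [MeasurableSpace α] (m : Measure (ℕ → α)) (c : ℝ) : Prop :=
  ∀ n k, 1 ≤ n → 1 ≤ k → ∀ (u : Fin n → α) (v : Fin k → α),
    wordMass m (Fin.append u v) ≤ Real.exp c * (wordMass m u * wordMass m v)

section WordEntropy

variable {α : Type*} [MeasurableSpace α] [MeasurableSingletonClass α]
  {m m' : Measure (ℕ → α)} [IsProbabilityMeasure m']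

lemma relEntropy_wordMass_add_le [Fintype α] (hm' : MeasurePreserving shift m' m') {c : ℝ}
    (hsub : WordSubmultiplicative m c) {n k : ℕ} (hn : 1 ≤ n) (hk : 1 ≤ k)
    (hac : ∀ w : Fin (n + k) → α, wordMass m w = 0 → wordMass m' w = 0) :
    relEntropy (ι := Fin n → α) (wordMass m') (wordMass m) +
      relEntropy (ι := Fin k → α) (wordMass m') (wordMass m) - c ≤
      relEntropy (ι := Fin (n + k) → α) (wordMass m') (wordMass m) := by
  have hmarg := relEntropy_marginals_le (r := fun x : (Fin n → α) × (Fin k → α) =>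
      wordMass m' (Fin.append x.1 x.2)) (s := fun x => wordMass m (Fin.append x.1 x.2))
    (p := wordMass m) (q := wordMass m) (c := c) (fun _ => wordMass_nonneg _ _)
    (fun _ => wordMass_nonneg _ _) (wordMass_nonneg m)
    (by simp only [Fintype.sum_prod_type, sum_wordMass_append_right, sum_wordMass])
    (fun _ => hac _) (hsub n k hn hk)
  simp only [sum_wordMass_append_right, sum_wordMass_append_left m' hm'] at hmarg
  exact hmarg.trans_eq (Fintype.sum_equiv (Fin.appendEquiv n k) _ _ fun _ => rfl)

lemma relEntropy_wordMass_le [Fintype α] (hm' : MeasurePreserving shift m' m') {c : ℝ}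
    (hsub : WordSubmultiplicative m c) {t : ℕ → ℝ}
    (ht : Tendsto (fun n : ℕ => t n / n) atTop (𝓝 0))
    (hle : ∀ n, 1 ≤ n → ∀ w : Fin n → α, wordMass m' w ≤ Real.exp (t n) * wordMass m w)
    {n : ℕ} (hn : 1 ≤ n) : relEntropy (ι := Fin n → α) (wordMass m') (wordMass m) ≤ c := by
  set d : ℕ → ℝ := fun k => relEntropy (ι := Fin k → α) (wordMass m') (wordMass m)
  have hac {k : ℕ} (hk : 1 ≤ k) (w : Fin k → α) (hw : wordMass m w = 0) : wordMass m' w = 0 :=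
    le_antisymm ((hle k hk w).trans_eq (by rw [hw, mul_zero])) (wordMass_nonneg _ _)
  have hsuper (k : ℕ) (hk : 1 ≤ k) : d n + d k - c ≤ d (n + k) :=
    relEntropy_wordMass_add_le hm' hsub hn hk (hac (by omega))
  have hupper (k : ℕ) (hk : 1 ≤ k) : d k ≤ t k :=
    relEntropy_le_of_le_exp_mul (wordMass_nonneg m') (sum_wordMass m' k) (hle k hk)
  have hbound := le_mul_of_add_le (v := fun k => d k - c) (T := fun k => t k - c)
    (e := d n - c) (slope := 0) hn le_rfl (fun k hk => by linarith [hsuper k hk])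
    (fun k hk => by linarith [hupper k hk])
    (by simpa only [sub_div, sub_zero] using ht.sub (tendsto_const_div_atTop_nhds_zero_nat c))
  linarith

lemma absolutelyContinuous_of_wordSubmultiplicative [Finite α]
    [IsProbabilityMeasure m] (hm' : MeasurePreserving shift m' m') {c : ℝ}
    (hsub : WordSubmultiplicative m c) {t : ℕ → ℝ}
    (ht : Tendsto (fun n : ℕ => t n / n) atTop (𝓝 0))
    (hle : ∀ n, 1 ≤ n → ∀ w : Fin n → α, wordMass m' w ≤ Real.exp (t n) * wordMass m w) :
    m' ≪ m := by
  cases nonempty_fintype α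
  refine absolutelyContinuous_of_words fun ε hε =>
    ⟨Real.exp (-((|c| + 1) / ε)), Real.exp_pos _, fun n hn S hS => ?_⟩
  have hentropy := relEntropy_wordMass_le hm' hsub ht hle hn
  rw [← S.coe_toFinset, measureReal_block_preimage] at hS ⊢
  have hac (w : Fin n → α) (hw : wordMass m w = 0) : wordMass m' w = 0 :=
    le_antisymm ((hle n hn w).trans_eq (by rw [hw, mul_zero])) (wordMass_nonneg _ _)
  have hmass := mul_sum_le_relEntropy_add_one (wordMass_nonneg m') (wordMass_nonneg m) hac
    (sum_wordMass m' n) (sum_wordMass m n) hS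
  rw [div_mul_eq_mul_div, div_le_iff₀ hε] at hmass
  refine le_of_mul_le_mul_left (hmass.trans ?_) (by positivity : 0 < |c| + 1)
  gcongr
  exact hentropy.trans (le_abs_self c)

end WordEntropy

/-! ### Gibbs measures -/

lemma inv_le_div_and_div_le_iff {M D C : ℝ} (hD : 0 < D) (hC : 0 < C) :
    (C⁻¹ ≤ M / D ∧ M / D ≤ C) ↔ 0 < M ∧ |Real.log M - Real.log D| ≤ Real.log C := by
  rw [div_le_iff₀ hD, le_div_iff₀ hD, inv_mul_le_iff₀ hC]
  constructor
  · rintro ⟨hDM, hMD⟩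
    have hM : 0 < M := pos_of_mul_pos_right (hD.trans_le hDM) hC.le
    exact ⟨hM, (abs_log_sub_log_le_iff hM hD).2 (by
      rw [Real.exp_log hC]; exact ⟨hMD, hDM⟩)⟩
  · rintro ⟨hM, hlog⟩
    rw [abs_log_sub_log_le_iff hM hD, Real.exp_log hC] at hlog
    exact hlog.symm

lemma birk_add {α : Type*} (g : (ℕ → α) → ℝ) (n k : ℕ) (x : ℕ → α) :
    birk g (n + k) x = birk g n x + birk g k (shift^[n] x) :=
  birkhoffSum_add shift g n k x

lemma birk_succ {α : Type*} (g : (ℕ → α) → ℝ) (n : ℕ) (x : ℕ → α) :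
    birk g (n + 1) x = g x + birk g n (shift x) :=
  birkhoffSum_succ' shift g n x

/-- The sequence of logarithmic potentials `L` is almost additive on `Y`, the defect of a splitting
`n + k` being at most `C n`. -/
def AlmostAdditiveOn {α : Type*} (Y : Set (ℕ → α)) (L : ℕ → (ℕ → α) → ℝ) (C : ℕ → ℝ) : Prop :=
  ∀ y ∈ Y, ∀ n k, 1 ≤ n → 1 ≤ k → |L (n + k) y - (L n y + L k (shift^[n] y))| ≤ C n

section AlmostAdditive

variable {α : Type*} {Y : Set (ℕ → α)} {f : ℕ → (ℕ → α) → ℝ}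

lemma abs_log_sub_log_add_log_le_iff {a b d C : ℝ} (ha : 0 < a) (hb : 0 < b) (hd : 0 < d) :
    |Real.log d - (Real.log a + Real.log b)| ≤ C ↔
      Real.exp (-C) * (a * b) ≤ d ∧ d ≤ Real.exp C * (a * b) := by
  rw [← Real.log_mul ha.ne' hb.ne', abs_log_sub_log_le_iff hd (mul_pos ha hb), and_comm,
    Real.exp_neg, inv_mul_le_iff₀ (Real.exp_pos C)]

lemma almostAdditiveOn_log_iff (hY : Set.MapsTo shift Y Y) (hf : ∀ y ∈ Y, ∀ n, 0 < f n y)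
    {C : ℕ → ℝ} : AlmostAdditiveOn Y (fun n y => Real.log (f n y)) C ↔
      ∀ y ∈ Y, ∀ n k, 1 ≤ n → 1 ≤ k →
        Real.exp (-(C n)) * (f n y * f k (shift^[n] y)) ≤ f (n + k) y ∧
          f (n + k) y ≤ Real.exp (C n) * (f n y * f k (shift^[n] y)) :=
  forall₄_congr fun y hy n k => forall₂_congr fun _ _ => abs_log_sub_log_add_log_le_iff
    (hf y hy n) (hf _ (hY.iterate n hy) k) (hf y hy (n + k))

lemma AlmostAdditiveOn.mono {L : ℕ → (ℕ → α) → ℝ} {C D : ℕ → ℝ} (h : AlmostAdditiveOn Y L C)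
    (hCD : C ≤ D) : AlmostAdditiveOn Y L D :=
  fun y hy n k hn hk => (h y hy n k hn hk).trans (hCD n)

end AlmostAdditive

/-- `m` satisfies, on `Y`, the Gibbs inequalities with pressure `P` for the sequence of potentials
`L`, with logarithmic error at most `c n` on words of length `n`. Unlike in `GibbsSeq`, the
potentials are the logarithms `log f_n` and cylinders are not intersected with `Y`. -/
def LogGibbs {α : Type*} [MeasurableSpace α] (Y : Set (ℕ → α)) (L : ℕ → (ℕ → α) → ℝ)
    (m : Measure (ℕ → α)) (P : ℝ) (c : ℕ → ℝ) : Prop :=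
  ∀ y ∈ Y, ∀ n, 1 ≤ n → 0 < wordMass m (block n y) ∧
    |Real.log (wordMass m (block n y)) - (L n y - n * P)| ≤ c n

section Gibbs

variable {α : Type*} [MeasurableSpace α] {Y : Set (ℕ → α)} {m m' : Measure (ℕ → α)}
  {L L' : ℕ → (ℕ → α) → ℝ} {P P' : ℝ} {c c' : ℕ → ℝ}

lemma LogGibbs.congr (h : LogGibbs Y L m P c) {b : ℕ → ℝ}
    (hL : ∀ y ∈ Y, ∀ n, 1 ≤ n → |L n y - L' n y| ≤ b n) :
    LogGibbs Y L' m P fun n => c n + b n := by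
  refine fun y hy n hn => ⟨(h y hy n hn).1, ?_⟩
  rw [show Real.log (wordMass m (block n y)) - (L' n y - n * P) =
    Real.log (wordMass m (block n y)) - (L n y - n * P) + (L n y - L' n y) by ring]
  exact (abs_add_le _ _).trans (add_le_add (h y hy n hn).2 (hL y hy n hn))

lemma almostAdditiveOn_of_logGibbs_birk (hY : Set.MapsTo shift Y Y) {b b' : ℝ} {g : (ℕ → α) → ℝ}
    (hL : LogGibbs Y L m P fun _ => b) (hg : LogGibbs Y (birk g) m P' fun _ => b') :
    AlmostAdditiveOn Y L fun _ => 3 * (b + b') := by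
  have cohomologous (y : ℕ → α) (hy : y ∈ Y) (n : ℕ) (hn : 1 ≤ n) :
      |L n y - birk g n y - n * (P - P')| ≤ b + b' := by
    have hLn := abs_le.1 (hL y hy n hn).2
    have hgn := abs_le.1 (hg y hy n hn).2
    exact abs_le.2 ⟨by linarith, by linarith⟩
  intro y hy n k hn hk
  have hsum := abs_le.1 (cohomologous y hy (n + k) (by omega))
  have hleft := abs_le.1 (cohomologous y hy n hn)
  have hright := abs_le.1 (cohomologous _ (hY.iterate n hy) k hk)
  rw [birk_add] at hsum
  push_cast at hsum
  exact abs_le.2 ⟨by linarith, by linarith⟩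

variable [MeasurableSingletonClass α] [Finite α]

lemma IsInvariantOn.measureReal_cyl (hm : IsInvariantOn m Y) (y : ℕ → α) (n : ℕ) :
    m.real (cyl Y y n) = wordMass m (block n y) := by
  have := hm.1
  have hcyl : cyl Y y n = Y ∩ block n ⁻¹' {block n y} := by
    ext z
    exact and_congr_right fun _ => block_eq_block_iff.symm
  have hmeas := measurableSet_block_preimage n {block n y}
  have hY : m.real Y = 1 := by rw [measureReal_def, hm.2.1, ENNReal.toReal_one]
  have hsplit := measureReal_inter_add_sdiff (μ := m) (s := Y) hmeas
  have hcompl := measureReal_compl (μ := m) hmeas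
  rw [probReal_univ] at hcompl
  have hle : m.real (Y ∩ block n ⁻¹' {block n y}) ≤ wordMass m (block n y) :=
    measureReal_mono Set.inter_subset_right
  have hdiff : m.real (Y \ block n ⁻¹' {block n y}) ≤ m.real (block n ⁻¹' {block n y})ᶜ :=
    measureReal_mono fun z hz => hz.2
  rw [hcyl]
  exact hle.antisymm (by rw [wordMass]; linarith)

lemma IsInvariantOn.exists_block_eq (hm : IsInvariantOn m Y) {n : ℕ} {w : Fin n → α}
    (hw : wordMass m w ≠ 0) : ∃ y ∈ Y, block n y = w := by
  have := hm.1
  by_contra! hno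
  have hsub : Y ⊆ (block n ⁻¹' {w})ᶜ := fun y hy => hno y hy
  have hcompl := prob_compl_eq_one_iff (μ := m) (measurableSet_block_preimage n {w})
  exact hw (by rw [wordMass, measureReal_def, hcompl.1
    (prob_le_one.antisymm (hm.2.1 ▸ measure_mono hsub)), ENNReal.toReal_zero])

lemma IsInvariantOn.gibbs_ratio_iff (hm : IsInvariantOn m Y) {g : (ℕ → α) → ℝ} {C : ℝ}
    (hC : 0 < C) (y : ℕ → α) (n : ℕ) :
    (C⁻¹ ≤ (m (cyl Y y n)).toReal / (Real.exp (-(n : ℝ) * P) * Real.exp (birk g n y)) ∧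
      (m (cyl Y y n)).toReal / (Real.exp (-(n : ℝ) * P) * Real.exp (birk g n y)) ≤ C) ↔
    0 < wordMass m (block n y) ∧
      |Real.log (wordMass m (block n y)) - (birk g n y - n * P)| ≤ Real.log C := by
  rw [← measureReal_def, hm.measureReal_cyl, ← Real.exp_add,
    inv_le_div_and_div_le_iff (Real.exp_pos _) hC, Real.log_exp, neg_mul, neg_add_eq_sub]

lemma gibbsFun_iff_logGibbs (hm : IsInvariantOn m Y) {g : (ℕ → α) → ℝ} :
    GibbsFun Y g m ↔ ∃ P c, LogGibbs Y (birk g) m P fun _ => c := by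
  constructor
  · rintro ⟨P, C, hC, h⟩
    exact ⟨P, Real.log C, fun y hy n hn => (hm.gibbs_ratio_iff hC y n).1 (h y hy n hn)⟩
  · rintro ⟨P, c, h⟩
    exact ⟨P, Real.exp c, Real.exp_pos c, fun y hy n hn =>
      (hm.gibbs_ratio_iff (Real.exp_pos c) y n).2 (by rw [Real.log_exp]; exact h y hy n hn)⟩

lemma weakGibbsFun_iff_logGibbs (hm : IsInvariantOn m Y) {g : (ℕ → α) → ℝ} :
    WeakGibbsFun Y g m ↔ ∃ (P : ℝ) (c : ℕ → ℝ), Tendsto (fun n : ℕ => c n / n) atTop (𝓝 0) ∧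
      LogGibbs Y (birk g) m P c := by
  constructor
  · rintro ⟨P, C, hC, hlim, h⟩
    exact ⟨P, fun n => Real.log (C n), hlim, fun y hy n hn =>
      (hm.gibbs_ratio_iff (hC n hn) y n).1 (h y hy n hn)⟩
  · rintro ⟨P, c, hlim, h⟩
    exact ⟨P, fun n => Real.exp (c n), fun n _ => Real.exp_pos _, by simpa only [Real.log_exp],
      fun y hy n hn => (hm.gibbs_ratio_iff (Real.exp_pos _) y n).2
        (by rw [Real.log_exp]; exact h y hy n hn)⟩

lemma LogGibbs.wordSubmultiplicative {b : ℝ} (h : LogGibbs Y L m P fun _ => b)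
    (hm : IsInvariantOn m Y) (hY : Set.MapsTo shift Y Y)
    (hL : ∀ y ∈ Y, ∀ n k, L (n + k) y ≤ L n y + L k (shift^[n] y)) :
    WordSubmultiplicative m (3 * b) := by
  intro n k hn hk u v
  rcases eq_or_ne (wordMass m (Fin.append u v)) 0 with hzero | hpos
  · rw [hzero]
    have := wordMass_nonneg m u
    have := wordMass_nonneg m v
    positivity
  obtain ⟨y, hy, hyw⟩ := hm.exists_block_eq hpos
  rw [block_add] at hyw
  obtain ⟨rfl, rfl⟩ := append_eq_append_iff.1 hyw
  obtain ⟨hpos_nk, hlog_nk⟩ := h y hy (n + k) (by omega)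
  obtain ⟨hpos_n, hlog_n⟩ := h y hy n hn
  obtain ⟨hpos_k, hlog_k⟩ := h _ (hY.iterate n hy) k hk
  rw [← block_add, ← Real.log_le_log_iff hpos_nk (by positivity),
    Real.log_mul (Real.exp_ne_zero _) (by positivity), Real.log_exp,
    Real.log_mul hpos_n.ne' hpos_k.ne']
  push_cast at hlog_nk
  linarith [abs_le.1 hlog_nk, abs_le.1 hlog_n, abs_le.1 hlog_k, hL y hy n k]

lemma LogGibbs.wordMass_le (h : LogGibbs Y L m P c) (h' : LogGibbs Y L m' P' c')
    (hm : IsInvariantOn m Y) {n : ℕ} (hn : 1 ≤ n) (w : Fin n → α) :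
    wordMass m w ≤ Real.exp (c n + c' n + n * (P' - P)) * wordMass m' w := by
  rcases eq_or_ne (wordMass m w) 0 with hzero | hpos
  · rw [hzero]
    exact mul_nonneg (Real.exp_pos _).le (wordMass_nonneg _ _)
  obtain ⟨y, hy, rfl⟩ := hm.exists_block_eq hpos
  obtain ⟨hpos_m, hlog_m⟩ := h y hy n hn
  obtain ⟨hpos_m', hlog_m'⟩ := h' y hy n hn
  rw [← Real.log_le_log_iff hpos_m (by positivity),
    Real.log_mul (Real.exp_ne_zero _) hpos_m'.ne', Real.log_exp]
  linarith [abs_le.1 hlog_m, abs_le.1 hlog_m']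

lemma LogGibbs.pressure_le (h : LogGibbs Y L m P c) (h' : LogGibbs Y L m' P' c')
    (hc : Tendsto (fun n : ℕ => c n / n) atTop (𝓝 0))
    (hc' : Tendsto (fun n : ℕ => c' n / n) atTop (𝓝 0))
    (hm : IsInvariantOn m Y) (hm' : IsInvariantOn m' Y) : P ≤ P' := by
  cases nonempty_fintype α
  have := hm.1
  have := hm'.1
  have nonneg_exponent (n : ℕ) (hn : 1 ≤ n) : 0 ≤ c n + c' n + n * (P' - P) := by
    have htotal := Finset.sum_le_sum fun w (_ : w ∈ Finset.univ) => h.wordMass_le h' hm hn w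
    rwa [← Finset.mul_sum, sum_wordMass, sum_wordMass, mul_one, Real.one_le_exp_iff] at htotal
  have hlim := (hc.add hc').add_const (P' - P)
  rw [add_zero, zero_add] at hlim
  refine sub_nonneg.1 (ge_of_tendsto hlim ?_)
  filter_upwards [eventually_ge_atTop 1] with n hn
  have hn0 : (0 : ℝ) < n := by exact_mod_cast hn
  calc (0 : ℝ) ≤ (c n + c' n + n * (P' - P)) / n := div_nonneg (nonneg_exponent n hn) hn0.le
    _ = c n / n + c' n / n + (P' - P) := by field_simp

lemma LogGibbs.eq_of_ergodic (h : LogGibbs Y L m P c) (h' : LogGibbs Y L m' P' c')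
    (hc : Tendsto (fun n : ℕ => c n / n) atTop (𝓝 0))
    (hc' : Tendsto (fun n : ℕ => c' n / n) atTop (𝓝 0))
    (hm : IsInvariantOn m Y) (hm' : IsInvariantOn m' Y) (herg : Ergodic shift m) {b : ℝ}
    (hsub : WordSubmultiplicative m b) : m' = m := by
  have := hm.1
  have := hm'.1
  obtain rfl : P = P' :=
    (h.pressure_le h' hc hc' hm hm').antisymm (h'.pressure_le h hc' hc hm' hm)
  refine herg.eq_of_absolutelyContinuous hm'.measurePreserving
    (absolutelyContinuous_of_wordSubmultiplicative hm'.measurePreserving hsub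
      (t := fun n => c' n + c n) (by simpa only [add_div, add_zero] using hc'.add hc)
      fun n hn w => ?_)
  simpa only [sub_self, mul_zero, add_zero] using h'.wordMass_le h hm' hn w

end Gibbs

/-! ### Markov shifts and ergodicity -/

/-- The one-sided Markov shift (shift of finite type of order one) whose allowed transitions are
given by the relation `R`. -/
def markovShift {α : Type*} (R : α → α → Prop) : Set (ℕ → α) :=
  {x | ∀ n, R (x n) (x (n + 1))}

/-- The sequence that reads the first `k` symbols of `x` and continues with `z`. -/
def splice {α : Type*} (x : ℕ → α) (k : ℕ) (z : ℕ → α) : ℕ → α :=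
  fun t => if t < k then x t else z (t - k)

section MarkovShift

variable {α : Type*} {R : α → α → Prop}

lemma mapsTo_shift_markovShift : Set.MapsTo shift (markovShift R) (markovShift R) :=
  fun _ hx n => hx (n + 1)

lemma splice_of_lt {x z : ℕ → α} {k t : ℕ} (h : t < k) : splice x k z t = x t :=
  if_pos h

lemma splice_add (x : ℕ → α) (k : ℕ) (z : ℕ → α) (t : ℕ) : splice x k z (k + t) = z t := by
  simp [splice]

lemma shift_iterate_splice (x : ℕ → α) (k : ℕ) (z : ℕ → α) : shift^[k] (splice x k z) = z :=
  funext fun t => by rw [shift_iterate_apply, splice_add]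

lemma splice_mem_markovShift {x z : ℕ → α} {k : ℕ} (hx : x ∈ markovShift R)
    (hz : z ∈ markovShift R) (hxz : x k = z 0) : splice x k z ∈ markovShift R := by
  intro n
  rcases lt_or_ge n k with hnk | hkn
  · rw [splice_of_lt hnk]
    rcases (Nat.succ_le_of_lt hnk).eq_or_lt with rfl | hnk'
    · have hx' := hx n
      rwa [hxz, ← splice_add x (n + 1) z 0] at hx'
    · rw [splice_of_lt hnk']
      exact hx n
  · obtain ⟨t, rfl⟩ := Nat.exists_eq_add_of_le hkn
    rw [add_assoc, splice_add, splice_add]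
    exact hz t

lemma appearsIn_singleton {X : Set (ℕ → α)} {x : ℕ → α} (hx : x ∈ X) (k : ℕ) :
    AppearsIn X [x k] :=
  ⟨x, hx, k, fun i => by simp⟩

lemma exists_transition_length (hirr : IrreducibleShift (markovShift R)) (a b : α) :
    ∃ l : ℕ, ∀ x ∈ markovShift R, ∀ z ∈ markovShift R, ∀ k, x k = a → z 0 = b →
      ∃ t ∈ markovShift R, t 0 = a ∧ t (l + 1) = b := by
  by_cases hab : AppearsIn (markovShift R) [a] ∧ AppearsIn (markovShift R) [b]
  · obtain ⟨w, t, ht, k, hw⟩ := hirr [a] [b] hab.1 hab.2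
    refine ⟨w.length, fun _ _ _ _ _ _ _ =>
      ⟨shift^[k] t, mapsTo_shift_markovShift.iterate k ht, ?_, ?_⟩⟩
    · simpa [shift_iterate_apply] using hw ⟨0, by simp⟩
    · simpa [shift_iterate_apply, List.getElem_append] using hw ⟨w.length + 1, by simp⟩
  · refine ⟨0, fun x hx z hz k hxa hzb => absurd ⟨?_, ?_⟩ hab⟩
    · exact hxa ▸ appearsIn_singleton hx k
    · exact hzb ▸ appearsIn_singleton hz 0

lemma exists_connecting_point [Finite α] (hirr : IrreducibleShift (markovShift R)) :
    ∃ p : ℕ, ∀ x ∈ markovShift R, ∀ z ∈ markovShift R, ∀ n, 1 ≤ n →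
      ∃ l ≤ p, ∃ w ∈ markovShift R, block n w = block n x ∧ shift^[n + l] w = z := by
  choose l hl using exists_transition_length hirr
  obtain ⟨p, hp⟩ := Finite.exists_le fun q : α × α => l q.1 q.2
  refine ⟨p, fun x hx z hz n hn => ?_⟩
  obtain ⟨k, rfl⟩ := Nat.exists_eq_add_of_le' hn
  obtain ⟨t, ht, ht0, htl⟩ := hl (x k) (z 0) x hx z hz k rfl rfl
  set tail := splice t (l (x k) (z 0) + 1) z
  have htail : tail ∈ markovShift R := splice_mem_markovShift ht hz htl
  have htail0 : x k = tail 0 := ht0.symm.trans (splice_of_lt (Nat.succ_pos _)).symm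
  refine ⟨_, hp (x k, z 0), splice x k tail, splice_mem_markovShift hx htail htail0,
    block_eq_block_iff.2 fun i hi => ?_, ?_⟩
  · rcases (Nat.lt_succ_iff.1 hi).eq_or_lt with rfl | hik
    · exact (splice_add x i tail 0).trans htail0.symm
    · exact splice_of_lt hik
  · rw [show k + 1 + l (x k) (z 0) = l (x k) (z 0) + 1 + k by ring, Function.iterate_add_apply,
      shift_iterate_splice, shift_iterate_splice]

lemma abs_birk_le {f : (ℕ → α) → ℝ} {B : ℝ} (hB : ∀ x, |f x| ≤ B) (n : ℕ) (x : ℕ → α) :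
    |birk f n x| ≤ n * B := by
  calc |birk f n x| ≤ ∑ i ∈ Finset.range n, |f (shift^[i] x)| := Finset.abs_sum_le_sum_abs _ _
    _ ≤ n * B := by simpa using Finset.sum_le_sum fun i (_ : i ∈ Finset.range n) => hB (shift^[i] x)

lemma mul_sub_birk_le {f : (ℕ → α) → ℝ} {B : ℝ} (hB : ∀ x, |f x| ≤ B) (P : ℝ) {l p : ℕ}
    (hlp : l ≤ p) (x : ℕ → α) : l * P - birk f l x ≤ p * (|P| + B) := by
  have hB0 : 0 ≤ B := (abs_nonneg _).trans (hB x)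
  calc l * P - birk f l x ≤ l * |P| + l * B := by
        rw [sub_eq_add_neg]
        gcongr
        · exact le_abs_self P
        · exact (neg_le_abs _).trans (abs_birk_le hB _ _)
    _ ≤ p * (|P| + B) := by rw [← mul_add]; gcongr

end MarkovShift

/-- Any two words can be joined, with a gap of at most `p` symbols, at the cost of a factor `c` in
the mass. -/
def WordConnected {α : Type*} [MeasurableSpace α] (m : Measure (ℕ → α)) (p : ℕ) (c : ℝ) : Prop :=
  ∀ n k, 1 ≤ n → 1 ≤ k → ∀ (u : Fin n → α) (v : Fin k → α), ∃ l ≤ p,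
    c * (wordMass m u * wordMass m v) ≤
      m.real (block n ⁻¹' {u} ∩ shift^[n + l] ⁻¹' (block k ⁻¹' {v}))

section Ergodicity

variable {α : Type*} [MeasurableSpace α] [MeasurableSingletonClass α] [Finite α]
  {m : Measure (ℕ → α)}

lemma LogGibbs.wordConnected {X : Set (ℕ → α)} {f : (ℕ → α) → ℝ} {B P b : ℝ} {p : ℕ}
    (h : LogGibbs X (birk f) m P fun _ => b) (hm : IsInvariantOn m X) (hB : ∀ x, |f x| ≤ B)
    (hconn : ∀ x ∈ X, ∀ z ∈ X, ∀ n, 1 ≤ n →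
      ∃ l ≤ p, ∃ w ∈ X, block n w = block n x ∧ shift^[n + l] w = z) :
    WordConnected m p (Real.exp (-(3 * b + p * (|P| + B)))) := by
  have := hm.1
  intro n k hn hk u v
  rcases eq_or_ne (wordMass m u) 0 with hu | hu
  · exact ⟨0, p.zero_le, by simp [hu]⟩
  rcases eq_or_ne (wordMass m v) 0 with hv | hv
  · exact ⟨0, p.zero_le, by simp [hv]⟩
  obtain ⟨x, hx, rfl⟩ := hm.exists_block_eq hu
  obtain ⟨z, hz, rfl⟩ := hm.exists_block_eq hv
  obtain ⟨l, hlp, w, hw, hwx, hwz⟩ := hconn x hx z hz n hn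
  refine ⟨l, hlp, le_trans ?_ (measureReal_mono (s₁ := block (n + l + k) ⁻¹' {block (n + l + k) w})
    fun y hy => ?_)⟩
  · rw [← hwx]
    obtain ⟨hpos_w, hlog_w⟩ := h w hw n hn
    obtain ⟨hpos_z, hlog_z⟩ := h z hz k hk
    obtain ⟨hpos_wz, hlog_wz⟩ := h w hw (n + l + k) (by omega)
    rw [birk_add, birk_add, hwz] at hlog_wz
    have hgap := mul_sub_birk_le hB P hlp (shift^[n] w)
    change _ ≤ wordMass m _
    rw [← Real.log_le_log_iff (by positivity) hpos_wz, Real.log_mul (Real.exp_ne_zero _)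
      (by positivity), Real.log_exp, Real.log_mul hpos_w.ne' hpos_z.ne']
    push_cast at hlog_wz
    linarith [abs_le.1 hlog_w, abs_le.1 hlog_z, abs_le.1 hlog_wz]
  · rw [Set.mem_preimage, Set.mem_singleton_iff, block_add (n + l) k y, block_add (n + l) k w,
      hwz, append_eq_append_iff, block_add n l y, block_add n l w, append_eq_append_iff] at hy
    exact ⟨hy.1.1.trans hwx, hy.2⟩

variable [IsProbabilityMeasure m] {p : ℕ} {c : ℝ}

lemma WordConnected.mul_measure_le (hconn : WordConnected m p c) (hc : 0 < c) {B : Set (ℕ → α)}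
    (hB : MeasurableSet B) (hinv : shift ⁻¹' B = B) {n : ℕ} (hn : 1 ≤ n) (u : Fin n → α) :
    ENNReal.ofReal c * m (block n ⁻¹' {u}) * m B ≤ (p + 1) * m (block n ⁻¹' {u} ∩ B) := by
  set A := block n ⁻¹' {u}
  let shifted (l : ℕ) : Measure (ℕ → α) := (m.restrict A).map shift^[n + l]
  have shifted_apply (l : ℕ) {S : Set (ℕ → α)} (hS : MeasurableSet S) :
      shifted l S = m (A ∩ shift^[n + l] ⁻¹' S) := by
    rw [Measure.map_apply (measurable_shift.iterate _) hS,
      Measure.restrict_apply (measurable_shift.iterate _ hS), Set.inter_comm]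
  have hle : (ENNReal.ofReal c * m A) • m ≤ ∑ l ∈ Finset.range (p + 1), shifted l := by
    refine measure_le_of_words fun k hk v => ?_
    obtain ⟨l, hlp, hl⟩ := hconn n k hn hk u v
    calc ((ENNReal.ofReal c * m A) • m) (block k ⁻¹' {v})
        = ENNReal.ofReal (c * (wordMass m u * wordMass m v)) := by
          rw [ENNReal.ofReal_mul hc.le, ENNReal.ofReal_mul (wordMass_nonneg _ _), wordMass,
            wordMass, ofReal_measureReal, ofReal_measureReal, Measure.smul_apply, smul_eq_mul,
            mul_assoc]
      _ ≤ shifted l (block k ⁻¹' {v}) := by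
          rw [shifted_apply l (measurableSet_block_preimage k _)]
          exact ENNReal.ofReal_le_of_le_toReal hl
      _ ≤ (∑ l ∈ Finset.range (p + 1), shifted l) (block k ⁻¹' {v}) := by
          rw [Measure.finsetSum_apply]
          exact Finset.single_le_sum (f := fun l => shifted l (block k ⁻¹' {v}))
            (fun _ _ => zero_le) (Finset.mem_range.2 (Nat.lt_succ_of_le hlp))
  have hleB := hle B
  rw [Measure.smul_apply, Measure.finsetSum_apply, smul_eq_mul] at hleB
  have hinv_iterate (j : ℕ) : shift^[j] ⁻¹' B = B :=
    (congrFun Set.preimage_iterate_eq B).trans (Function.iterate_fixed hinv j)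
  simpa [shifted_apply _ hB, hinv_iterate] using hleB

lemma WordConnected.ergodic (hconn : WordConnected m p c) (hc : 0 < c)
    (hm : MeasurePreserving shift m m) : Ergodic shift m := by
  refine ⟨hm, ⟨fun B hB hinv => ?_⟩⟩
  have : IsFiniteMeasure (((p : ENNReal) + 1) • m.restrict B) :=
    Measure.smul_finite _ (by finiteness)
  have hle : (ENNReal.ofReal c * m B) • m ≤ ((p : ENNReal) + 1) • m.restrict B := by
    refine measure_le_of_words fun n hn u => ?_
    rw [Measure.smul_apply, Measure.smul_apply, smul_eq_mul, smul_eq_mul,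
      Measure.restrict_apply (measurableSet_block_preimage n _), mul_right_comm]
    exact hconn.mul_measure_le hc hB hinv hn u
  have hzero : ENNReal.ofReal c * m B * m Bᶜ = 0 := by
    simpa [Measure.restrict_apply hB.compl] using hle Bᶜ
  rw [eventuallyConst_set']
  rcases mul_eq_zero.1 hzero with hcB | hBc
  · exact .inl (ae_eq_empty.2 ((mul_eq_zero.1 hcB).resolve_left (ENNReal.ofReal_pos.2 hc).ne'))
  · exact .inr (ae_eq_univ.2 hBc)

end Ergodicity

/-! ### The sequence `g_n` and the push-forward of a Gibbs measure -/

/-- The contribution of the word `u` to `g_n`: the supremum of `e^{S_n f}` over the cylinder `[u]`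
of `X`. It is `0` if that cylinder is empty. -/
def wordSup {α : Type*} (X : Set (ℕ → α)) (f : (ℕ → α) → ℝ) {n : ℕ} (u : Fin n → α) : ℝ :=
  ⨆ x : ↥{z ∈ X | block n z = u}, Real.exp (birk f n x)

section WordSup

variable {α : Type*} {X : Set (ℕ → α)} {f : (ℕ → α) → ℝ} {B : ℝ}

lemma wordSup_nonneg {n : ℕ} (u : Fin n → α) : 0 ≤ wordSup X f u :=
  Real.iSup_nonneg fun _ => (Real.exp_pos _).le

lemma wordSup_eq_zero {n : ℕ} {u : Fin n → α} (hu : ∀ x ∈ X, block n x ≠ u) :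
    wordSup X f u = 0 := by
  have : IsEmpty ↥{z ∈ X | block n z = u} := ⟨fun x => hu x x.2.1 x.2.2⟩
  exact Real.iSup_of_isEmpty _

lemma exp_birk_le_wordSup (hB : ∀ x, |f x| ≤ B) {x : ℕ → α} (hx : x ∈ X) (n : ℕ) :
    Real.exp (birk f n x) ≤ wordSup X f (block n x) := by
  refine le_ciSup (f := fun z : ↥{z ∈ X | block n z = block n x} => Real.exp (birk f n z))
    ⟨Real.exp (n * B), ?_⟩ ⟨x, hx, rfl⟩
  rintro _ ⟨z, rfl⟩
  exact Real.exp_le_exp.2 ((le_abs_self _).trans (abs_birk_le hB n z))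

lemma wordSup_append_le (hX : Set.MapsTo shift X X) (hB : ∀ x, |f x| ≤ B) {n k : ℕ}
    (u : Fin n → α) (v : Fin k → α) :
    wordSup X f (Fin.append u v) ≤ wordSup X f u * wordSup X f v := by
  refine Real.iSup_le ?_ (mul_nonneg (wordSup_nonneg _) (wordSup_nonneg _))
  rintro ⟨x, hx, hxuv⟩
  rw [block_add, append_eq_append_iff] at hxuv
  obtain ⟨rfl, rfl⟩ := hxuv
  dsimp only
  rw [birk_add, Real.exp_add]
  exact mul_le_mul (exp_birk_le_wordSup hB hx n)
    (exp_birk_le_wordSup hB (hX.iterate n hx) k) (Real.exp_pos _).le (wordSup_nonneg _)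

variable {R : α → α → Prop} {F : α → α → ℝ}

lemma birk_congr_of_le {n : ℕ} {x z : ℕ → α} (h : ∀ i ≤ n, x i = z i) :
    birk (fun x => F (x 0) (x 1)) n x = birk (fun x => F (x 0) (x 1)) n z := by
  refine Finset.sum_congr rfl fun i hi => ?_
  have hin := Finset.mem_range.1 hi
  simp only [shift_iterate_apply]
  rw [h _ (by omega), h _ (by omega)]

lemma wordSup_append_eq_mul {x : ℕ → α} (hx : x ∈ markovShift R) (k : ℕ) {m : ℕ}
    {v : Fin (m + 1) → α} (hv : v 0 = x k) :
    wordSup (markovShift R) (fun x => F (x 0) (x 1)) (Fin.append (block k x) v) =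
      Real.exp (birk (fun x => F (x 0) (x 1)) k x) *
        wordSup (markovShift R) (fun x => F (x 0) (x 1)) v := by
  rw [wordSup, wordSup, Real.mul_iSup_of_nonneg (Real.exp_pos _).le]
  have mem_iff (z : ℕ → α) : block (k + (m + 1)) z = Fin.append (block k x) v ↔
      block k z = block k x ∧ block (m + 1) (shift^[k] z) = v := by
    rw [block_add, append_eq_append_iff]
  refine Function.Surjective.iSup_congr (fun z => ⟨shift^[k] z.1,
    mapsTo_shift_markovShift.iterate k z.2.1, ((mem_iff _).1 z.2.2).2⟩) ?_ ?_
  · rintro ⟨z, hz, rfl⟩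
    refine ⟨⟨splice x k z, splice_mem_markovShift hx hz hv.symm, (mem_iff _).2 ⟨?_, ?_⟩⟩,
      Subtype.ext (shift_iterate_splice x k z)⟩
    · exact block_eq_block_iff.2 fun i hi => splice_of_lt hi
    · rw [shift_iterate_splice]
  · rintro ⟨z, hz, hzv⟩
    obtain ⟨hzx, rfl⟩ := (mem_iff z).1 hzv
    rw [block_shift_iterate_zero] at hv
    have hle (i : ℕ) (hi : i ≤ k) : z i = x i := by
      rcases hi.eq_or_lt with rfl | hik
      · exact hv
      · exact block_eq_block_iff.1 hzx i hik
    dsimp only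
    rw [birk_add _ k (m + 1), Real.exp_add, birk_congr_of_le hle]

lemma exists_wordSup_append_eq_mul {k : ℕ} (u : Fin k → α) (b : α) :
    ∃ c, ∀ m (v : Fin (m + 1) → α), v 0 = b →
      wordSup (markovShift R) (fun x => F (x 0) (x 1)) (Fin.append u v) =
        c * wordSup (markovShift R) (fun x => F (x 0) (x 1)) v := by
  by_cases hub : ∃ x ∈ markovShift R, block k x = u ∧ x k = b
  · obtain ⟨x, hx, rfl, rfl⟩ := hub
    exact ⟨_, fun m v hv => wordSup_append_eq_mul hx k hv⟩
  · refine ⟨0, fun m v hv => ?_⟩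
    rw [zero_mul]
    refine wordSup_eq_zero fun x hx hxuv => hub ⟨x, hx, ?_⟩
    rw [block_add, append_eq_append_iff] at hxuv
    exact ⟨hxuv.1, by rw [← hv, ← hxuv.2, block_shift_iterate_zero]⟩

end WordSup

section FibreSums

variable {α β : Type*} {π : α → β}

lemma comp_append (π : α → β) {n k : ℕ} (u : Fin n → α) (v : Fin k → α) :
    π ∘ Fin.append u v = Fin.append (π ∘ u) (π ∘ v) :=
  funext <| Fin.addCases (by simp) (by simp)

lemma sum_fibre_add [Fintype α] [DecidableEq β] {n k : ℕ} (φ : (Fin (n + k) → α) → ℝ) (y : ℕ → β) :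
    ∑ w : Fin (n + k) → α with π ∘ w = block (n + k) y, φ w =
      ∑ u : Fin n → α with π ∘ u = block n y,
        ∑ v : Fin k → α with π ∘ v = block k (shift^[n] y), φ (Fin.append u v) := by
  rw [← Finset.sum_product']
  refine (Finset.sum_equiv (Fin.appendEquiv n k) (fun uv => ?_) fun _ _ => rfl).symm
  simp [Fin.appendEquiv, block_add, comp_append, append_eq_append_iff]

lemma measurable_comp_left [MeasurableSpace α] [MeasurableSpace β] (hπ : Measurable π) :
    Measurable fun x : ℕ → α => π ∘ x :=
  measurable_pi_lambda _ fun i => hπ.comp (measurable_pi_apply i)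

lemma wordMass_map [Fintype α] [MeasurableSpace α] [MeasurableSingletonClass α] [Finite β]
    [DecidableEq β] [MeasurableSpace β] [MeasurableSingletonClass β] (m : Measure (ℕ → α))
    [IsFiniteMeasure m] (π : α → β) (n : ℕ) (w : Fin n → β) :
    wordMass (m.map fun x => π ∘ x) w = ∑ u : Fin n → α with π ∘ u = w, wordMass m u := by
  rw [wordMass, map_measureReal_apply (measurable_comp_left (measurable_of_finite π))
    (measurableSet_block_preimage n _), ← measureReal_block_preimage]
  congr 1
  ext x
  simp [funext_iff, block]

end FibreSums

lemma IsInvariantOn.map {α β : Type*} [MeasurableSpace α] [MeasurableSpace β] {X : Set (ℕ → α)}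
    {m : Measure (ℕ → α)} (hm : IsInvariantOn m X) {φ : (ℕ → α) → ℕ → β} (hφ : Measurable φ)
    (hshift : Function.Semiconj φ shift shift) : IsInvariantOn (m.map φ) (φ '' X) := by
  have := hm.1
  have hprob : IsProbabilityMeasure (m.map φ) := Measure.isProbabilityMeasure_map hφ.aemeasurable
  refine ⟨hprob, prob_le_one.antisymm ?_, fun B hB => ?_⟩
  · rw [← hm.2.1]
    exact (measure_mono (Set.subset_preimage_image φ X)).trans
      (Measure.le_map_apply hφ.aemeasurable _)
  · rw [Measure.map_apply hφ (measurable_shift hB), Measure.map_apply hφ hB,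
      ← hm.2.2 _ (hφ hB), ← Set.preimage_comp, ← Set.preimage_comp, hshift.comp_eq]

section RelativePressure

variable {k l : ℕ} {X : Set (ℕ → Fin k)} {π : Fin k → Fin l} {f : (ℕ → Fin k) → ℝ} {B : ℝ}

lemma gseq_eq_sum (n : ℕ) (y : ℕ → Fin l) :
    gseq X π f n y = ∑ u : Fin n → Fin k with π ∘ u = block n y, wordSup X f u := by
  rw [gseq, Finset.sum_filter]
  refine Finset.sum_congr rfl fun u _ => ?_
  have hcyl : {z ∈ X | block n z = u} = {z ∈ X | ∀ i : Fin n, z i = u i} := by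
    simp only [funext_iff, block]
  by_cases hu : ∃ x ∈ X, ∀ i : Fin n, x i = u i
  · rw [wordSup, hcyl]
    exact if_congr (by simp [hu, funext_iff, block]) rfl rfl
  · rw [wordSup_eq_zero fun x hx hxu => hu ⟨x, hx, congrFun hxu⟩, if_neg fun h => hu h.1, ite_self]

lemma gseq_pos (hB : ∀ x, |f x| ≤ B) {x : ℕ → Fin k} (hx : x ∈ X) (n : ℕ) :
    0 < gseq X π f n (π ∘ x) := by
  rw [gseq_eq_sum]
  refine Finset.sum_pos' (fun u _ => wordSup_nonneg u) ⟨block n x, by simp [funext_iff, block], ?_⟩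
  exact (Real.exp_pos _).trans_le (exp_birk_le_wordSup hB hx n)

lemma gseq_add_le (hX : Set.MapsTo shift X X) (hB : ∀ x, |f x| ≤ B) (n m : ℕ) (y : ℕ → Fin l) :
    gseq X π f (n + m) y ≤ gseq X π f n y * gseq X π f m (shift^[n] y) := by
  rw [gseq_eq_sum, gseq_eq_sum, gseq_eq_sum, sum_fibre_add, Finset.sum_mul_sum]
  exact Finset.sum_le_sum fun u _ => Finset.sum_le_sum fun v _ => wordSup_append_le hX hB u v

lemma exists_abs_log_gseq_le (n : ℕ) : ∃ B, ∀ y, |Real.log (gseq X π f n y)| ≤ B := by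
  obtain ⟨B, hB⟩ := Finite.exists_le fun w : Fin n → Fin l =>
    |Real.log (∑ u : Fin n → Fin k with π ∘ u = w, wordSup X f u)|
  exact ⟨B, fun y => by rw [gseq_eq_sum]; exact hB (block n y)⟩

lemma measurable_gseq (n : ℕ) : Measurable (gseq X π f n) := by
  have heq : gseq X π f n =
      (fun w => ∑ u : Fin n → Fin k with π ∘ u = w, wordSup X f u) ∘ block n :=
    funext fun y => gseq_eq_sum n y
  rw [heq]
  exact (measurable_of_finite _).comp (measurable_block n)

lemma exists_gseq_eq_mul {R : Fin k → Fin k → Prop} {F : Fin k → Fin k → ℝ} {x : ℕ → Fin k}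
    {j : ℕ} (hj : ∀ a, π a = π (x j) → a = x j) :
    ∃ c, ∀ m, gseq (markovShift R) π (fun x => F (x 0) (x 1)) (j + (m + 1)) (π ∘ x) =
      c * gseq (markovShift R) π (fun x => F (x 0) (x 1)) (m + 1) (shift^[j] (π ∘ x)) := by
  choose c hc using fun u : Fin j → Fin k =>
    exists_wordSup_append_eq_mul (R := R) (F := F) u (x j)
  refine ⟨∑ u : Fin j → Fin k with π ∘ u = block j (π ∘ x), c u, fun m => ?_⟩
  rw [gseq_eq_sum, gseq_eq_sum, sum_fibre_add, Finset.sum_mul_sum]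
  refine Finset.sum_congr rfl fun u _ => Finset.sum_congr rfl fun v hv => hc u m v (hj _ ?_)
  simpa [block_shift_iterate_zero] using congrFun (Finset.mem_filter.1 hv).2 0

variable {m : Measure (ℕ → Fin k)} {P : ℝ} {c : ℕ → ℝ}

lemma LogGibbs.wordMass_le_wordSup (h : LogGibbs X (birk f) m P c) (hm : IsInvariantOn m X)
    (hB : ∀ x, |f x| ≤ B) {n : ℕ} (hn : 1 ≤ n) (u : Fin n → Fin k) :
    wordMass m u ≤ Real.exp (c n) * (Real.exp (-(n * P)) * wordSup X f u) := by
  rcases eq_or_ne (wordMass m u) 0 with hzero | hpos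
  · rw [hzero]
    have := wordSup_nonneg (X := X) (f := f) u
    positivity
  obtain ⟨x, hx, rfl⟩ := hm.exists_block_eq hpos
  obtain ⟨hpos_x, hlog⟩ := h x hx n hn
  calc wordMass m (block n x) = Real.exp (Real.log (wordMass m (block n x))) :=
        (Real.exp_log hpos_x).symm
    _ ≤ Real.exp (c n + (-(n * P) + birk f n x)) :=
        Real.exp_le_exp.2 (by linarith [abs_le.1 hlog])
    _ ≤ Real.exp (c n) * (Real.exp (-(n * P)) * wordSup X f (block n x)) := by
        rw [Real.exp_add, Real.exp_add]
        gcongr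
        exact exp_birk_le_wordSup hB hx n

lemma LogGibbs.wordSup_le_wordMass (h : LogGibbs X (birk f) m P c) {n : ℕ} (hn : 1 ≤ n)
    (u : Fin n → Fin k) :
    Real.exp (-(n * P)) * wordSup X f u ≤ Real.exp (c n) * wordMass m u := by
  rw [wordSup, Real.mul_iSup_of_nonneg (Real.exp_pos _).le]
  refine Real.iSup_le ?_ (mul_nonneg (Real.exp_pos _).le (wordMass_nonneg _ _))
  rintro ⟨x, hx, rfl⟩
  obtain ⟨hpos, hlog⟩ := h x hx n hn
  dsimp only
  calc Real.exp (-(n * P)) * Real.exp (birk f n x)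
      ≤ Real.exp (c n + Real.log (wordMass m (block n x))) := by
        rw [← Real.exp_add]
        exact Real.exp_le_exp.2 (by linarith [abs_le.1 hlog])
    _ = Real.exp (c n) * wordMass m (block n x) := by rw [Real.exp_add, Real.exp_log hpos]

lemma LogGibbs.map (h : LogGibbs X (birk f) m P c) (hm : IsInvariantOn m X)
    (hB : ∀ x, |f x| ≤ B) :
    LogGibbs ((fun x => π ∘ x) '' X) (fun n y => Real.log (gseq X π f n y))
      (m.map fun x => π ∘ x) P c := by
  have := hm.1
  rintro _ ⟨x, hx, rfl⟩ n hn
  have hg := gseq_pos (π := π) hB hx n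
  have hupper : wordMass (m.map fun x => π ∘ x) (block n (π ∘ x)) ≤
      Real.exp (c n) * (Real.exp (-(n * P)) * gseq X π f n (π ∘ x)) := by
    rw [wordMass_map, gseq_eq_sum, Finset.mul_sum, Finset.mul_sum]
    exact Finset.sum_le_sum fun u _ => h.wordMass_le_wordSup hm hB hn u
  have hlower : Real.exp (-(n * P)) * gseq X π f n (π ∘ x) ≤
      Real.exp (c n) * wordMass (m.map fun x => π ∘ x) (block n (π ∘ x)) := by
    rw [wordMass_map, gseq_eq_sum, Finset.mul_sum, Finset.mul_sum]
    exact Finset.sum_le_sum fun u _ => h.wordSup_le_wordMass hn u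
  have hD : 0 < Real.exp (-(n * P)) * gseq X π f n (π ∘ x) := mul_pos (Real.exp_pos _) hg
  have hM := pos_of_mul_pos_right (hD.trans_le hlower) (Real.exp_pos _).le
  refine ⟨hM, ?_⟩
  have hlog := (abs_log_sub_log_le_iff hM hD).2 ⟨hupper, hlower⟩
  rwa [Real.log_mul (Real.exp_ne_zero _) hg.ne', Real.log_exp, neg_add_eq_sub] at hlog

end RelativePressure

/-! ### The induced potential -/

/-- The potentials `L` split exactly, up to a constant, at every visit to the symbol `0`: what
follows the visit at time `k` contributes independently of what precedes it. -/
def SplitsAtZeros (Y : Set (ℕ → Fin 2)) (L : ℕ → (ℕ → Fin 2) → ℝ) : Prop :=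
  ∀ y ∈ Y, ∀ k, y k = 0 → ∃ c, ∀ m, L (k + (m + 1)) y = c + L (m + 1) (shift^[k] y)

/-- The first time `k ≥ 1` at which `y` visits the symbol `0`, or `0` if there is none. -/
def firstReturn (y : ℕ → Fin 2) : ℕ :=
  sInf {k | 1 ≤ k ∧ y k = 0}

/-- The potential `L_{N+1}(y) - L_N(σ y)`, where `N ≥ 1` is any visiting time of the symbol `0`
(for potentials that split at zeros the choice is immaterial), and `slope` on the sequences without
such a time. Its Birkhoff sums telescope to `L`. -/
def inducedPotential (L : ℕ → (ℕ → Fin 2) → ℝ) (slope : ℝ) (y : ℕ → Fin 2) : ℝ :=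
  if firstReturn y = 0 then slope
  else L (firstReturn y + 1) y - L (firstReturn y) (shift y)

section InducedPotential

lemma firstReturn_eq_zero_iff {y : ℕ → Fin 2} : firstReturn y = 0 ↔ ∀ k, 1 ≤ k → y k ≠ 0 := by
  simp [firstReturn, Nat.sInf_eq_zero, Set.eq_empty_iff_forall_notMem]

lemma one_le_firstReturn_and_apply_eq_zero {y : ℕ → Fin 2} {N : ℕ} (hN : 1 ≤ N) (hyN : y N = 0) :
    1 ≤ firstReturn y ∧ y (firstReturn y) = 0 :=
  Nat.sInf_mem (s := {k | 1 ≤ k ∧ y k = 0}) ⟨N, hN, hyN⟩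

lemma firstReturn_le {y : ℕ → Fin 2} {N : ℕ} (hN : 1 ≤ N) (hyN : y N = 0) : firstReturn y ≤ N :=
  Nat.sInf_le ⟨hN, hyN⟩

lemma measurable_firstReturn : Measurable firstReturn := by
  have firstReturn_eq_iff {k : ℕ} (hk : 1 ≤ k) (y : ℕ → Fin 2) :
      firstReturn y = k ↔ y k = 0 ∧ ∀ j < k, 1 ≤ j → y j ≠ 0 := by
    constructor
    · rintro rfl
      have hne : firstReturn y ≠ 0 := Nat.one_le_iff_ne_zero.1 hk
      rw [Ne, firstReturn_eq_zero_iff] at hne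
      push Not at hne
      obtain ⟨N, hN, hyN⟩ := hne
      exact ⟨(one_le_firstReturn_and_apply_eq_zero hN hyN).2,
        fun j hj h1 hyj => hj.not_ge (firstReturn_le h1 hyj)⟩
    · rintro ⟨hyk, hmin⟩
      obtain ⟨hr, hyr⟩ := one_le_firstReturn_and_apply_eq_zero hk hyk
      exact (firstReturn_le hk hyk).antisymm (not_lt.1 fun hlt => hmin _ hlt hr hyr)
  have measurableSet_visit (j : ℕ) : MeasurableSet {y : ℕ → Fin 2 | y j = 0} :=
    measurable_pi_apply j (measurableSet_singleton 0)
  refine measurable_to_countable' fun k => ?_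
  rcases Nat.eq_zero_or_pos k with rfl | hk
  · have heq : firstReturn ⁻¹' {0} = ⋂ j, ⋂ (_ : 1 ≤ j), {y | y j = 0}ᶜ := by
      ext y
      simp [firstReturn_eq_zero_iff]
    rw [heq]
    exact .iInter fun j => .iInter fun _ => (measurableSet_visit j).compl
  · have heq : firstReturn ⁻¹' {k} = {y | y k = 0} ∩ ⋂ j, ⋂ (_ : j < k), ⋂ (_ : 1 ≤ j),
        {y | y j = 0}ᶜ := by
      ext y
      simp [firstReturn_eq_iff hk]
    rw [heq]
    exact (measurableSet_visit k).inter
      (.iInter fun j => .iInter fun _ => .iInter fun _ => (measurableSet_visit j).compl)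

variable {Y : Set (ℕ → Fin 2)} {L : ℕ → (ℕ → Fin 2) → ℝ} {C : ℕ → ℝ} {slope B : ℝ}

lemma measurable_inducedPotential (hL : ∀ n, Measurable (L n)) :
    Measurable (inducedPotential L slope) := by
  have hdiff : Measurable fun p : ℕ × (ℕ → Fin 2) => L (p.1 + 1) p.2 - L p.1 (shift p.2) :=
    measurable_from_prod_countable_right fun n =>
      (hL (n + 1)).sub ((hL n).comp measurable_shift)
  exact Measurable.ite (measurable_firstReturn (measurableSet_singleton 0)) measurable_const
    (hdiff.comp (measurable_firstReturn.prodMk measurable_id))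

lemma abs_inducedPotential_le (hadd : AlmostAdditiveOn Y L C) (hC : 0 ≤ C 1)
    (hB : ∀ y, |L 1 y| ≤ B) {y : ℕ → Fin 2} (hy : y ∈ Y) :
    |inducedPotential L slope y| ≤ |slope| + B + C 1 := by
  have hB0 : 0 ≤ B := (abs_nonneg _).trans (hB y)
  rw [inducedPotential]
  split_ifs with hr
  · linarith
  · have hsplit := abs_le.1 (hadd y hy 1 (firstReturn y) le_rfl (Nat.one_le_iff_ne_zero.2 hr))
    rw [Function.iterate_one, add_comm 1] at hsplit
    have hL1 := abs_le.1 (hB y)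
    have := abs_nonneg slope
    exact abs_le.2 ⟨by linarith, by linarith⟩

lemma inducedPotential_eq (hY : Set.MapsTo shift Y Y) (hsplit : SplitsAtZeros Y L)
    {y : ℕ → Fin 2} (hy : y ∈ Y) {N : ℕ} (hN : 1 ≤ N) (hyN : y N = 0) :
    inducedPotential L slope y = L (N + 1) y - L N (shift y) := by
  obtain ⟨hr, hyr⟩ := one_le_firstReturn_and_apply_eq_zero hN hyN
  obtain ⟨m, rfl⟩ := Nat.exists_eq_add_of_le (firstReturn_le hN hyN)
  rw [inducedPotential, if_neg (Nat.one_le_iff_ne_zero.1 hr)]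
  obtain ⟨j, hj⟩ := Nat.exists_eq_add_of_le' hr
  rw [hj] at hyr ⊢
  obtain ⟨c, hc⟩ := hsplit y hy (j + 1) hyr
  obtain ⟨c', hc'⟩ := hsplit (shift y) (hY hy) j hyr
  rw [← Function.iterate_succ_apply] at hc'
  rw [show j + 1 + m + 1 = j + 1 + (m + 1) by ring, show j + 1 + m = j + (m + 1) by ring]
  linarith [hc 0, hc m, hc' 0, hc' m]

lemma birk_inducedPotential_eq (hY : Set.MapsTo shift Y Y) (hsplit : SplitsAtZeros Y L)
    {y : ℕ → Fin 2} (hy : y ∈ Y) (n j : ℕ) (hyj : y (n + j) = 0) :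
    birk (inducedPotential L slope) n y = L (n + (j + 1)) y - L (j + 1) (shift^[n] y) := by
  induction n generalizing y with
  | zero => simp [birk]
  | succ n ih =>
    have hyj' : (shift y) (n + j) = 0 := by rwa [shift, add_right_comm]
    rw [birk_succ, ih (hY hy) hyj', inducedPotential_eq hY hsplit hy (by omega) hyj,
      Function.iterate_succ_apply, show n + 1 + j + 1 = n + 1 + (j + 1) by ring,
      show n + 1 + j = n + (j + 1) by ring]
    ring

lemma eq_const_one_of_ne_zero {y : ℕ → Fin 2} (h : ∀ i, y i ≠ 0) : y = fun _ => 1 :=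
  funext fun i => Fin.eq_one_of_ne_zero _ (h i)

lemma exists_last_zero {y : ℕ → Fin 2} {n : ℕ} (hex : ∃ i, y i = 0) (hn : ∀ i, n ≤ i → y i ≠ 0) :
    ∃ j, y j = 0 ∧ ∀ i, j < i → y i ≠ 0 := by
  obtain ⟨i, hi⟩ := hex
  have hbound {k : ℕ} (hk : y k = 0) : k ≤ n := le_of_not_ge fun h => hn k h hk
  refine ⟨Nat.findGreatest (fun k => y k = 0) n,
    Nat.findGreatest_spec (P := fun k => y k = 0) (hbound hi) hi, ?_⟩
  exact fun k hk hyk => Nat.findGreatest_is_greatest hk (hbound hyk) hyk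

lemma birk_inducedPotential_of_shift_eq_one {y : ℕ → Fin 2} (hy : shift y = fun _ => 1) (n : ℕ) :
    birk (inducedPotential L slope) n y = n * slope := by
  have inducedPotential_eq_slope {z : ℕ → Fin 2} (hz : shift z = fun _ => 1) :
      inducedPotential L slope z = slope := by
    refine if_pos (firstReturn_eq_zero_iff.2 fun k hk => ?_)
    obtain ⟨i, rfl⟩ := Nat.exists_eq_add_of_le' hk
    simp [show z (i + 1) = 1 from congrFun hz i]
  have hfixed : Function.IsFixedPt shift (fun _ : ℕ => (1 : Fin 2)) := rfl
  have hone (n : ℕ) : birk (inducedPotential L slope) n (fun _ => 1) = n * slope := by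
    rw [← nsmul_eq_mul]
    exact (hfixed.birkhoffSum_eq _ n).trans (by rw [inducedPotential_eq_slope hfixed])
  cases n with
  | zero => simp [birk]
  | succ n =>
    rw [birk_succ, hy, hone, inducedPotential_eq_slope hy]
    push_cast
    ring

lemma exists_slope (hsub : ∀ y ∈ Y, ∀ n k, L (n + k) y ≤ L n y + L k (shift^[n] y))
    (hadd : AlmostAdditiveOn Y L C) :
    ∃ slope : ℝ, (fun _ => 1) ∈ Y → ∀ n : ℕ, 1 ≤ n → |L n (fun _ => 1) - n * slope| ≤ C n := by
  by_cases hone : (fun _ => 1) ∈ Y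
  · have hfixed (n : ℕ) : shift^[n] (fun _ : ℕ => (1 : Fin 2)) = fun _ => 1 :=
      Function.iterate_fixed rfl n
    obtain ⟨slope, hslope⟩ := exists_slope_of_subadditive (u := fun n => L n fun _ => 1) (c := C)
      (fun n k => by simpa only [hfixed] using hsub _ hone n k) fun n k hn hk => by
        have := (abs_le.1 (hadd _ hone n k hn hk)).1
        rw [hfixed] at this
        linarith
    exact ⟨slope, fun _ => hslope⟩
  · exact ⟨0, fun h => absurd h hone⟩

lemma abs_linear_sub_le_of_shift_eq_one (hY : Set.MapsTo shift Y Y) (hadd : AlmostAdditiveOn Y L C)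
    (hC : Monotone C) (hC0 : ∀ n, 0 ≤ C n) (hB : ∀ y, |L 1 y| ≤ B)
    (hslope : (fun _ => 1) ∈ Y → ∀ n : ℕ, 1 ≤ n → |L n (fun _ => 1) - n * slope| ≤ C n)
    {y : ℕ → Fin 2} (hy : y ∈ Y) (hy1 : shift y = fun _ => 1) (n : ℕ) :
    |((n + 1 : ℕ) : ℝ) * slope - L (n + 1) y| ≤ |slope| + B + C 1 + C (n + 1) := by
  have hL1 := abs_le.1 (hB y)
  have hslope_abs := abs_le.1 (le_refl |slope|)
  push_cast
  rcases Nat.eq_zero_or_pos n with rfl | hn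
  · have := hC0 1
    norm_num
    exact abs_le.2 ⟨by linarith, by linarith⟩
  · have hsplit := abs_le.1 (hadd y hy 1 n le_rfl hn)
    have hlinear := abs_le.1 (hslope (hy1 ▸ hY hy) n hn)
    have hmono := hC n.le_succ
    rw [Function.iterate_one, hy1, add_comm 1] at hsplit
    rw [Nat.succ_eq_add_one] at hmono
    exact abs_le.2 ⟨by linarith, by linarith⟩

lemma abs_sub_birk_inducedPotential_le (hY : Set.MapsTo shift Y Y) (hsplit : SplitsAtZeros Y L)
    (hadd : AlmostAdditiveOn Y L C) (hC : Monotone C) (hC0 : ∀ n, 0 ≤ C n)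
    (hB : ∀ y, |L 1 y| ≤ B)
    (hslope : (fun _ => 1) ∈ Y → ∀ n : ℕ, 1 ≤ n → |L n (fun _ => 1) - n * slope| ≤ C n)
    {y : ℕ → Fin 2} (hy : y ∈ Y) {n : ℕ} (hn : 1 ≤ n) :
    |L n y - birk (inducedPotential L slope) n y| ≤ |slope| + B + C 1 + C n := by
  have hB0 : 0 ≤ B := (abs_nonneg _).trans (hB y)
  have hK : C n ≤ |slope| + B + C 1 + C n := by linarith [abs_nonneg slope, hC0 1]
  by_cases hzero : ∃ N, n ≤ N ∧ y N = 0
  · obtain ⟨N, hnN, hyN⟩ := hzero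
    obtain ⟨j, rfl⟩ := Nat.exists_eq_add_of_le hnN
    rw [birk_inducedPotential_eq hY hsplit hy n j hyN, abs_sub_comm, sub_sub, add_comm (L _ _)]
    exact (hadd y hy n (j + 1) hn j.succ_pos).trans hK
  push Not at hzero
  by_cases hnever : ∀ i, y i ≠ 0
  · obtain rfl := eq_const_one_of_ne_zero hnever
    rw [birk_inducedPotential_of_shift_eq_one rfl]
    exact (hslope hy n hn).trans hK
  push Not at hnever
  obtain ⟨j, hyj, hlast⟩ := exists_last_zero hnever hzero
  have hjn : j < n := not_le.1 fun hnj => hzero j hnj hyj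
  obtain ⟨m, rfl⟩ := Nat.exists_eq_add_of_lt hjn
  have htail : shift (shift^[j] y) = fun _ => 1 := eq_const_one_of_ne_zero fun i => by
    rw [shift, shift_iterate_apply]
    exact hlast _ (by omega)
  obtain ⟨c, hc⟩ := hsplit y hy j hyj
  have hbirk : birk (inducedPotential L slope) (j + (m + 1)) y = c + (m + 1 : ℕ) * slope := by
    rw [birk_add, birk_inducedPotential_eq hY hsplit hy j 0 hyj, hc 0,
      birk_inducedPotential_of_shift_eq_one htail]
    ring
  rw [add_assoc, hbirk, hc, abs_sub_comm, add_sub_add_left_eq_sub]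
  refine (abs_linear_sub_le_of_shift_eq_one hY hadd hC hC0 hB hslope (hY.iterate j hy) htail
    m).trans ?_
  gcongr
  exact hC (by omega)

lemma exists_potential_of_almostAdditiveOn (hY : Set.MapsTo shift Y Y) (hL : ∀ n, Measurable (L n))
    (hB : ∀ y, |L 1 y| ≤ B) (hsplit : SplitsAtZeros Y L)
    (hsub : ∀ y ∈ Y, ∀ n k, L (n + k) y ≤ L n y + L k (shift^[n] y))
    (hadd : AlmostAdditiveOn Y L C) (hC : Monotone C) (hC0 : ∀ n, 0 ≤ C n) :
    ∃ g, Measurable g ∧ (∃ D, ∀ y ∈ Y, |g y| ≤ D) ∧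
      ∃ K, ∀ y ∈ Y, ∀ n, 1 ≤ n → |L n y - birk g n y| ≤ K + C n := by
  obtain ⟨slope, hslope⟩ := exists_slope hsub hadd
  exact ⟨inducedPotential L slope, measurable_inducedPotential hL,
    ⟨_, fun _ => abs_inducedPotential_le hadd (hC0 1) hB⟩,
    _, fun _ hy _ => abs_sub_birk_inducedPotential_le hY hsplit hadd hC hC0 hB hslope hy⟩

end InducedPotential

/-! ### Almost additivity and Gibbs potentials on the factor -/

lemma GibbsFun.weakGibbsFun {α : Type*} [MeasurableSpace α] {Y : Set (ℕ → α)} {g : (ℕ → α) → ℝ}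
    {m : Measure (ℕ → α)} (h : GibbsFun Y g m) : WeakGibbsFun Y g m := by
  obtain ⟨P, C, hC, hgibbs⟩ := h
  exact ⟨P, fun _ => C, fun _ _ => hC, tendsto_const_div_atTop_nhds_zero_nat _, hgibbs⟩

lemma LogGibbs.exists_potential {Y : Set (ℕ → Fin 2)} {L : ℕ → (ℕ → Fin 2) → ℝ}
    {ν : Measure (ℕ → Fin 2)} {P b B : ℝ} {C : ℕ → ℝ} (h : LogGibbs Y L ν P fun _ => b)
    (hν : IsInvariantOn ν Y) (herg : Ergodic shift ν) (hY : Set.MapsTo shift Y Y)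
    (hL : ∀ n, Measurable (L n)) (hB : ∀ y, |L 1 y| ≤ B) (hsplit : SplitsAtZeros Y L)
    (hsub : ∀ y ∈ Y, ∀ n k, L (n + k) y ≤ L n y + L k (shift^[n] y))
    (hadd : AlmostAdditiveOn Y L C) (hC : Monotone C) (hC0 : ∀ n, 0 ≤ C n)
    (hlim : Tendsto (fun n : ℕ => C n / n) atTop (𝓝 0)) :
    ∃ g, Measurable g ∧ (∃ D, ∀ y ∈ Y, |g y| ≤ D) ∧
      (∃ K, LogGibbs Y (birk g) ν P fun n => K + C n) ∧
      ∀ ν', IsInvariantOn ν' Y → WeakGibbsFun Y g ν' → ν' = ν := by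
  obtain ⟨g, hg, hgbdd, K, hK⟩ :=
    exists_potential_of_almostAdditiveOn hY hL hB hsplit hsub hadd hC hC0
  have hgibbs : LogGibbs Y (birk g) ν P fun n => b + K + C n := by
    simpa only [add_assoc] using h.congr hK
  refine ⟨g, hg, hgbdd, ⟨b + K, hgibbs⟩, fun ν' hν' hweak => ?_⟩
  obtain ⟨P', c', hlim', hgibbs'⟩ := (weakGibbsFun_iff_logGibbs hν').1 hweak
  have hlim_error : Tendsto (fun n : ℕ => (b + K + C n) / n) atTop (𝓝 0) := by
    simpa only [add_div, add_zero] using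
      (tendsto_const_div_atTop_nhds_zero_nat (b + K)).add hlim
  exact hgibbs.eq_of_ergodic hgibbs' hlim_error hlim' hν hν' herg
    (h.wordSubmultiplicative hν hY hsub)

section Factor

lemma semiconj_comp_left {α β : Type*} (π : α → β) :
    Function.Semiconj (fun x : ℕ → α => π ∘ x) shift shift :=
  fun _ => rfl

variable {k l : ℕ} {R : Fin k → Fin k → Prop} {F : Fin k → Fin k → ℝ} {B P b : ℝ}

lemma mapsTo_shift_image_markovShift (π : Fin k → Fin l) :
    Set.MapsTo shift ((fun x => π ∘ x) '' markovShift R) ((fun x => π ∘ x) '' markovShift R) :=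
  (semiconj_comp_left π).mapsTo_image mapsTo_shift_markovShift

lemma log_gseq_add_le {X : Set (ℕ → Fin k)} {f : (ℕ → Fin k) → ℝ} (hX : Set.MapsTo shift X X)
    (hB : ∀ x, |f x| ≤ B) (π : Fin k → Fin l) :
    ∀ y ∈ (fun x => π ∘ x) '' X, ∀ n m, Real.log (gseq X π f (n + m) y) ≤
      Real.log (gseq X π f n y) + Real.log (gseq X π f m (shift^[n] y)) := by
  rintro _ ⟨x, hx, rfl⟩ n m
  refine (Real.log_le_log (gseq_pos hB hx _) (gseq_add_le hX hB n m _)).trans_eq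
    (Real.log_mul (gseq_pos hB hx n).ne' ?_)
  rw [← ((semiconj_comp_left π).iterate_right n) x]
  exact (gseq_pos hB (hX.iterate n hx) m).ne'

lemma splitsAtZeros_log_gseq {π : Fin k → Fin 2} (hπ : ∀ a b, π a = 0 → π b = 0 → a = b)
    (hB : ∀ x : ℕ → Fin k, |F (x 0) (x 1)| ≤ B) :
    SplitsAtZeros ((fun x => π ∘ x) '' markovShift R)
      fun n y => Real.log (gseq (markovShift R) π (fun x => F (x 0) (x 1)) n y) := by
  rintro _ ⟨x, hx, rfl⟩ j hj
  obtain ⟨c, hc⟩ := exists_gseq_eq_mul (R := R) (F := F) (π := π) (x := x) (j := j)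
    fun a ha => hπ a (x j) (ha.trans hj) hj
  refine ⟨Real.log c, fun m => ?_⟩
  dsimp only
  have hne := (gseq_pos (π := π) hB hx (j + (m + 1))).ne'
  rw [hc] at hne ⊢
  exact Real.log_mul (left_ne_zero_of_mul hne) (right_ne_zero_of_mul hne)

lemma LogGibbs.ergodic_map {μ : Measure (ℕ → Fin k)}
    (h : LogGibbs (markovShift R) (birk fun x => F (x 0) (x 1)) μ P fun _ => b)
    (hμ : IsInvariantOn μ (markovShift R)) (hirr : IrreducibleShift (markovShift R))
    (hB : ∀ x : ℕ → Fin k, |F (x 0) (x 1)| ≤ B) (π : Fin k → Fin l) :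
    Ergodic shift (μ.map fun x => π ∘ x) := by
  have := hμ.1
  obtain ⟨p, hp⟩ := exists_connecting_point hirr
  have hπ : Measurable fun x : ℕ → Fin k => π ∘ x := measurable_comp_left (measurable_of_finite π)
  exact (hπ.measurePreserving μ).ergodic_of_ergodic_semiconj
    ((h.wordConnected hμ hB hp).ergodic (Real.exp_pos _) hμ.measurePreserving)
    measurable_shift (semiconj_comp_left π)

end Factor

theorem stmt_18_general {k : ℕ} (R : Fin k → Fin k → Prop)
    (hirr : IrreducibleShift (markovShift R)) (π : Fin k → Fin 2)
    (hπ : ∀ a b, π a = 0 → π b = 0 → a = b) (F : Fin k → Fin k → ℝ)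
    (μ : Measure (ℕ → Fin k)) (hμ : IsInvariantOn μ (markovShift R))
    (hgibbs : GibbsFun (markovShift R) (fun x => F (x 0) (x 1)) μ) :
    let Y := (fun x => π ∘ x) '' markovShift R
    let ν := μ.map fun x => π ∘ x
    let g := gseq (markovShift R) π fun x => F (x 0) (x 1)
    ((∃ C : ℝ, 0 < C ∧ AAOn Y g C) ↔
      ∃ ghat : (ℕ → Fin 2) → ℝ, Measurable (fun y : Y => ghat y) ∧
        (∃ B : ℝ, ∀ y ∈ Y, |ghat y| ≤ B) ∧ IsInvariantOn ν Y ∧ GibbsFun Y ghat ν ∧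
        ∀ ν', IsInvariantOn ν' Y → GibbsFun Y ghat ν' → ν' = ν) ∧
    (WeakAAOn Y g →
      ∃ ghat : (ℕ → Fin 2) → ℝ, Measurable (fun y : Y => ghat y) ∧
        (∃ B : ℝ, ∀ y ∈ Y, |ghat y| ≤ B) ∧ IsInvariantOn ν Y ∧ WeakGibbsFun Y ghat ν ∧
        ∀ ν', IsInvariantOn ν' Y → WeakGibbsFun Y ghat ν' → ν' = ν) := by
  intro Y ν g
  obtain ⟨B, hB⟩ := Finite.exists_le fun q : Fin k × Fin k => |F q.1 q.2|
  replace hB (x : ℕ → Fin k) : |F (x 0) (x 1)| ≤ B := hB (x 0, x 1)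
  obtain ⟨P, b, hG⟩ := (gibbsFun_iff_logGibbs hμ).1 hgibbs
  obtain ⟨B', hB'⟩ := exists_abs_log_gseq_le (X := markovShift R) (π := π)
    (f := fun x => F (x 0) (x 1)) 1
  have hY : Set.MapsTo shift Y Y := mapsTo_shift_image_markovShift π
  have hg : ∀ y ∈ Y, ∀ n, 0 < g n y := Set.forall_mem_image.2 fun _ hx => gseq_pos hB hx
  have hν : IsInvariantOn ν Y :=
    hμ.map (measurable_comp_left (measurable_of_finite π)) (semiconj_comp_left π)
  have hνG : LogGibbs Y (fun n y => Real.log (g n y)) ν P fun _ => b := hG.map hμ hB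
  have exists_potential {C : ℕ → ℝ} := hνG.exists_potential (C := C) hν
    (hG.ergodic_map hμ hirr hB π) hY (fun n => Real.measurable_log.comp (measurable_gseq n)) hB'
    (splitsAtZeros_log_gseq hπ hB) (log_gseq_add_le mapsTo_shift_markovShift hB π)
  refine ⟨⟨?_, ?_⟩, ?_⟩
  · rintro ⟨C, hC, hadd⟩
    obtain ⟨ghat, hmeas, hbdd, ⟨K, hK⟩, hunique⟩ := exists_potential
      ((almostAdditiveOn_log_iff hY hg).2 hadd) monotone_const (fun _ => hC.le)
      (tendsto_const_div_atTop_nhds_zero_nat C)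
    exact ⟨ghat, hmeas.comp measurable_subtype_coe, hbdd, hν,
      (gibbsFun_iff_logGibbs hν).2 ⟨P, _, hK⟩, fun ν' hν' h => hunique ν' hν' h.weakGibbsFun⟩
  · rintro ⟨ghat, -, -, -, hghat, -⟩
    obtain ⟨P', b', hghat⟩ := (gibbsFun_iff_logGibbs hν).1 hghat
    have hadd := almostAdditiveOn_of_logGibbs_birk hY hνG hghat
    exact ⟨max 1 (3 * (b + b')), by positivity, (almostAdditiveOn_log_iff hY hg).1
      (hadd.mono fun _ => le_max_right _ _)⟩
  · rintro ⟨C, -, hlim, hadd⟩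
    obtain ⟨D, hmono, hD0, hCD, hDlim⟩ := exists_monotone_ge_of_tendsto_div hlim
    obtain ⟨ghat, hmeas, hbdd, ⟨K, hK⟩, hunique⟩ := exists_potential
      (((almostAdditiveOn_log_iff hY hg).2 hadd).mono hCD) hmono hD0 hDlim
    have herror : Tendsto (fun n : ℕ => (K + D n) / n) atTop (𝓝 0) := by
      simpa only [add_div, add_zero] using (tendsto_const_div_atTop_nhds_zero_nat K).add hDlim
    exact ⟨ghat, hmeas.comp measurable_subtype_coe, hbdd, hν,
      (weakGibbsFun_iff_logGibbs hν).2 ⟨P, _, herror, hK⟩, hunique⟩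

/-- Theorem `phd1` (i): under Setting (C), with `μ` an invariant Gibbs
measure for `f`, the sequence `𝓖 = {log g_n}` is almost additive on `Y` iff there is a
bounded Borel measurable `ĝ` on `Y` for which `πμ` is the unique invariant Gibbs
measure; and if `𝓖` is weakly almost additive, there is a bounded Borel measurable `ĝ`
for which `πμ` is the unique invariant weak Gibbs measure. (Symbols `1,2,3` of the
paper are `0,1,2` here, and symbols `1,2` of `Y` are `0,1`.) -/
theorem stmt_18
    (A : Fin 3 → Fin 3 → ℕ) (hA01 : ∀ i j, A i j = 0 ∨ A i j = 1)
    (X : Set (ℕ → Fin 3)) (hXdef : X = {x | ∀ n : ℕ, A (x n) (x (n + 1)) = 1})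
    (hXirr : IrreducibleShift X)
    (Y : Set (ℕ → Fin 2))
    (hYdef : Y = Set.univ ∨ Y = {y | ∀ n : ℕ, ¬(y n = 0 ∧ y (n + 1) = 0)})
    (hYirr : IrreducibleShift Y)
    (hsurj : (fun x => (projC (l := 3)) ∘ x) '' X = Y)
    (F : Fin 3 → Fin 3 → ℝ) (f : (ℕ → Fin 3) → ℝ)
    (hf : ∀ x : ℕ → Fin 3, f x = F (x 0) (x 1))
    (μ : Measure (ℕ → Fin 3)) (hμinv : IsInvariantOn μ X) (hμG : GibbsFun X f μ) :
    ((∃ C : ℝ, 0 < C ∧ AAOn Y (gseq X projC f) C) ↔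
      (∃ ghat : (ℕ → Fin 2) → ℝ,
        Measurable (fun y : Y => ghat ↑y) ∧ (∃ B : ℝ, ∀ y ∈ Y, |ghat y| ≤ B) ∧
        IsInvariantOn (μ.map (fun x => (projC (l := 3)) ∘ x)) Y ∧
        GibbsFun Y ghat (μ.map (fun x => (projC (l := 3)) ∘ x)) ∧
        ∀ ν : Measure (ℕ → Fin 2), IsInvariantOn ν Y → GibbsFun Y ghat ν →
          ν = μ.map (fun x => (projC (l := 3)) ∘ x))) ∧
    (WeakAAOn Y (gseq X projC f) →
      ∃ ghat : (ℕ → Fin 2) → ℝ,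
        Measurable (fun y : Y => ghat ↑y) ∧ (∃ B : ℝ, ∀ y ∈ Y, |ghat y| ≤ B) ∧
        IsInvariantOn (μ.map (fun x => (projC (l := 3)) ∘ x)) Y ∧
        WeakGibbsFun Y ghat (μ.map (fun x => (projC (l := 3)) ∘ x)) ∧
        ∀ ν : Measure (ℕ → Fin 2), IsInvariantOn ν Y → WeakGibbsFun Y ghat ν →
          ν = μ.map (fun x => (projC (l := 3)) ∘ x)) := by
  subst hXdef hsurj
  obtain rfl : f = fun x => F (x 0) (x 1) := funext hf
  exact stmt_18_general (fun i j => A i j = 1) hXirr projC (by decide) F μ hμinv hμG
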